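/- arXiv:1812.02127 — 6 statements merged into one kernel-verified Lean document; each statement's English description precedes it below -/
import Mathlib

section
/- For every θ ∈ ℝ^m and every i = 1,…,q, the map ε ↦ f^ε(θ|τ*), extended to ε = 0 by the value f(θ|τ*), has vanishing first partial derivative in ε_i at ε = 0: ∂_{ε_i} f^ε(θ|τ*)|_{ε=0} = 0. -/
/-!
Replacing the numerator density `f(·, θ)` by `φ = f(·, θ) - (f(τ*, θ) / f_T(τ*)) f_T`, which vanishes
at `τ*`, the increment `F θ ε - F θ 0` becomes `∫_D φ / ∫_D f_T` over the ellipse `D` with semi-axes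
`ε`. The ellipse is symmetric about `τ*`, so the linear part of `φ` at `τ*` integrates to zero over
it (`setIntegral_linear_eq_zero`), and what is left of `φ` is `o(‖ε‖)` uniformly on `D`. As `f_T` is
bounded below, the quotient is `o(‖ε‖)` (`norm_integral_ratio_le`).

Thus `F θ` has derivative `0` at `0` within the open positive orthant. The orthant is a set of
unique differentiability at its vertex `0`, and `F θ` is differentiable there, so its full
derivative at `0` is `0`, and with it every partial derivative.
-/

open MeasureTheory

/-- The ellipse acceptance region with centre `c` and semi-axes `ε`. -/
def ellipse {q : ℕ} (c ε : Fin q → ℝ) : Set (Fin q → ℝ) :=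
  {τ | ∑ i, ((τ i - c i) / ε i) ^ 2 ≤ 1}

lemma isClosed_ellipse {q : ℕ} (c ε : Fin q → ℝ) : IsClosed (ellipse c ε) := by
  unfold ellipse
  exact isClosed_le (by fun_prop) continuous_const

lemma norm_sub_le_of_mem_ellipse {q : ℕ} {c ε τ : Fin q → ℝ} (hε : ∀ i, 0 < ε i)
    (hτ : τ ∈ ellipse c ε) : ‖τ - c‖ ≤ ‖ε‖ := by
  refine (pi_norm_le_iff_of_nonneg (norm_nonneg _)).2 fun i => ?_
  have h1 : ((τ i - c i) / ε i) ^ 2 ≤ 1 :=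
    (Finset.single_le_sum (f := fun i => ((τ i - c i) / ε i) ^ 2)
      (fun j _ => sq_nonneg _) (Finset.mem_univ i)).trans hτ
  have h2 : |(τ i - c i) / ε i| ≤ 1 := (sq_le_one_iff_abs_le_one _).1 h1
  rw [abs_div, abs_of_pos (hε i), div_le_one (hε i)] at h2
  calc ‖(τ - c) i‖ = |τ i - c i| := rfl
    _ ≤ ε i := h2
    _ ≤ ‖ε i‖ := le_abs_self _
    _ ≤ ‖ε‖ := norm_le_pi_norm ε i

lemma isCompact_ellipse {q : ℕ} {c ε : Fin q → ℝ} (hε : ∀ i, 0 < ε i) :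
    IsCompact (ellipse c ε) := by
  refine (isCompact_closedBall c ‖ε‖).of_isClosed_subset (isClosed_ellipse c ε) fun τ hτ => ?_
  rw [Metric.mem_closedBall, dist_eq_norm]
  exact norm_sub_le_of_mem_ellipse hε hτ

lemma volume_ellipse_pos {q : ℕ} {c ε : Fin q → ℝ} (hε : ∀ i, 0 < ε i) :
    0 < volume.real (ellipse c ε) := by
  have ho : IsOpen {τ : Fin q → ℝ | ∑ i, ((τ i - c i) / ε i) ^ 2 < 1} :=
    isOpen_lt (by fun_prop) continuous_const
  have h0 : 0 < volume {τ : Fin q → ℝ | ∑ i, ((τ i - c i) / ε i) ^ 2 < 1} :=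
    ho.measure_pos volume ⟨c, by simp⟩
  have h1 : 0 < volume (ellipse c ε) :=
    h0.trans_le (measure_mono (Set.ofPred_subset_ofPred.2 fun τ hτ => le_of_lt hτ))
  exact ENNReal.toReal_pos h1.ne' (isCompact_ellipse hε).measure_lt_top.ne

/-- The linear part integrates to zero, since the point reflection `τ ↦ 2c - τ` preserves both
Lebesgue measure and the ellipse and changes the sign of the integrand. -/
lemma setIntegral_linear_eq_zero {q : ℕ} (c ε : Fin q → ℝ) (A : (Fin q → ℝ) →L[ℝ] ℝ) :
    ∫ τ in ellipse c ε, A (τ - c) = 0 := by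
  rw [← integral_indicator (isClosed_ellipse c ε).measurableSet]
  set g := (ellipse c ε).indicator (fun τ => A (τ - c)) with hg
  have h1 : ∀ τ, g (c + c - τ) = - g τ := by
    intro τ
    have hmem : c + c - τ ∈ ellipse c ε ↔ τ ∈ ellipse c ε := by
      simp only [ellipse, Set.mem_ofPred_eq, Pi.sub_apply, Pi.add_apply]
      have : ∀ i, ((c i + c i - τ i - c i) / ε i) ^ 2 = ((τ i - c i) / ε i) ^ 2 := by
        intro i; ring
      simp only [this]
    by_cases h : τ ∈ ellipse c ε
    · rw [hg, Set.indicator_of_mem (hmem.2 h), Set.indicator_of_mem h, ← map_neg]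
      congr 1
      abel
    · rw [hg, Set.indicator_of_notMem (fun h' => h (hmem.1 h')), Set.indicator_of_notMem h,
        neg_zero]
  have h2 : ∫ τ, g (c + c - τ) = ∫ τ, g τ := integral_sub_left_eq_self g volume (c + c)
  simp only [h1, integral_neg] at h2
  linarith

lemma setIntegral_ellipse_ge {q : ℕ} {c ε : Fin q → ℝ} (hε : ∀ i, 0 < ε i)
    {p : (Fin q → ℝ) → ℝ} (hp : Continuous p) {b : ℝ}
    (hpb : ∀ τ ∈ ellipse c ε, b ≤ p τ) :
    b * volume.real (ellipse c ε) ≤ ∫ τ in ellipse c ε, p τ := by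
  have hK := isCompact_ellipse (c := c) hε
  have := setIntegral_mono_on (μ := volume) (integrableOn_const hK.measure_lt_top.ne)
    (hp.continuousOn.integrableOn_compact hK) (isClosed_ellipse c ε).measurableSet hpb
  rwa [setIntegral_const, smul_eq_mul, mul_comm] at this

/-- Approximating `φ` by `τ ↦ A (τ - c)` to accuracy `κ` on the ellipse bounds the ratio of integrals by
`κ / b` independently of `A`, because the linear part integrates to zero. -/
lemma norm_integral_ratio_le {q : ℕ} {c ε : Fin q → ℝ} (hε : ∀ i, 0 < ε i)
    {φ p : (Fin q → ℝ) → ℝ} (hφ : Continuous φ) (hp : Continuous p)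
    (A : (Fin q → ℝ) →L[ℝ] ℝ) {κ b : ℝ} (hb : 0 < b)
    (hφA : ∀ τ ∈ ellipse c ε, ‖φ τ - A (τ - c)‖ ≤ κ)
    (hpb : ∀ τ ∈ ellipse c ε, b ≤ p τ) :
    ‖(∫ τ in ellipse c ε, φ τ) / ∫ τ in ellipse c ε, p τ‖ ≤ κ / b := by
  have hK := isCompact_ellipse (c := c) hε
  have hV : 0 < volume.real (ellipse c ε) := volume_ellipse_pos hε
  have hden := setIntegral_ellipse_ge hε hp hpb
  have hnum : ‖∫ τ in ellipse c ε, φ τ‖ ≤ κ * volume.real (ellipse c ε) := by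
    have h := integral_sub (μ := volume.restrict (ellipse c ε)) (hφ.continuousOn.integrableOn_compact hK)
      ((show Continuous fun τ => A (τ - c) by fun_prop).continuousOn.integrableOn_compact hK)
    rw [setIntegral_linear_eq_zero, sub_zero] at h
    rw [← h]
    exact norm_setIntegral_le_of_norm_le_const hK.measure_lt_top hφA
  have hbV : 0 < b * volume.real (ellipse c ε) := mul_pos hb hV
  rw [norm_div, Real.norm_of_nonneg (hbV.le.trans hden)]
  calc _ ≤ κ * volume.real (ellipse c ε) / (b * volume.real (ellipse c ε)) :=
        div_le_div₀ ((norm_nonneg _).trans hnum) hnum hbV hden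
    _ = κ / b := by field_simp

lemma uniqueDiffWithinAt_orthant (q : ℕ) :
    UniqueDiffWithinAt ℝ (Set.univ.pi fun _ : Fin q => Set.Ioi (0 : ℝ)) 0 := by
  refine uniqueDiffWithinAt_convex (convex_pi fun _ _ => convex_Ioi 0) ?_ ?_
  · rw [(isOpen_set_pi Set.finite_univ fun _ _ => isOpen_Ioi).interior_eq]
    exact ⟨fun _ => 1, fun _ _ => Set.mem_Ioi.2 one_pos⟩
  · rw [closure_pi_set]
    intro i _
    simp

/-- For every θ and every i, the map ε ↦ f^ε(θ|τ*), extended to ε = 0 by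
f(θ|τ*) = f(τ*,θ)/f_T(τ*), has vanishing first partial derivative in ε_i at ε = 0. -/
theorem abc_first_derivative_vanishes
    (q m : ℕ) (hq : 1 ≤ q) (hm : 1 ≤ m)
    (τs : Fin q → ℝ)
    (f : (Fin q → ℝ) → (Fin m → ℝ) → ℝ)
    (hf_smooth : ContDiff ℝ (⊤ : ℕ∞) (fun p : (Fin q → ℝ) × (Fin m → ℝ) => f p.1 p.2))
    (hf_pos : ∀ τ θ, 0 < f τ θ)
    (hf_int : ∀ τ, Integrable (f τ))
    (fT : (Fin q → ℝ) → ℝ)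
    (hfT : ∀ τ, fT τ = ∫ θ, f τ θ)
    (hfT_smooth : ContDiff ℝ (⊤ : ℕ∞) fT)
    (hfT_bdd : ∃ c > 0, ∀ τ ∈ Metric.ball τs 1, c ≤ fT τ)
    (hdom : ∃ g : (Fin m → ℝ) → ℝ, Integrable g ∧
      ∀ k : ℕ, k ≤ 6 → ∀ τ ∈ Metric.ball τs 1, ∀ θ,
        ‖iteratedFDeriv ℝ k (fun τ' => f τ' θ) τ‖ ≤ g θ)
    -- F θ is the map ε ↦ f^ε(θ|τ*) extended to ε = 0 by the posterior f(θ|τ*)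
    (F : (Fin m → ℝ) → (Fin q → ℝ) → ℝ)
    (hF0 : ∀ θ, F θ 0 = f τs θ / fT τs)
    (hFpos : ∀ θ (ε : Fin q → ℝ), (∀ i, 0 < ε i) →
      F θ ε = (∫ τ in {τ : Fin q → ℝ | ∑ i, ((τ i - τs i) / ε i) ^ 2 ≤ 1}, f τ θ) /
              (∫ τ in {τ : Fin q → ℝ | ∑ i, ((τ i - τs i) / ε i) ^ 2 ≤ 1}, fT τ))
    (hFC2 : ∀ θ, ContDiff ℝ 2 (F θ)) :
    ∀ (θ : Fin m → ℝ) (i : Fin q),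
      deriv (fun t : ℝ => F θ (Pi.single i t)) 0 = 0 := by
  intro θ i
  obtain ⟨b, hb, hbT⟩ := hfT_bdd
  have hf_diff : ContDiff ℝ (⊤ : ℕ∞) (fun τ => f τ θ) :=
    hf_smooth.comp (contDiff_id.prodMk contDiff_const)
  have hT0 : fT τs ≠ 0 := (hb.trans_le (hbT τs (Metric.mem_ball_self one_pos))).ne'
  set r : ℝ := f τs θ / fT τs with hr
  set φ : (Fin q → ℝ) → ℝ := fun τ => f τ θ - r * fT τ with hφdef
  have hφ : ContDiff ℝ (⊤ : ℕ∞) φ := hf_diff.sub (contDiff_const.mul hfT_smooth)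
  have hφ0 : φ τs = 0 := by
    simp only [hφdef, hr]
    field_simp
    ring
  have hφd : HasFDerivAt φ (fderiv ℝ φ τs) τs :=
    (hφ.differentiable (by simp)).differentiableAt.hasFDerivAt
  have hF : HasFDerivAt (F θ) (fderiv ℝ (F θ) 0) 0 :=
    ((hFC2 θ).differentiable (by simp)).differentiableAt.hasFDerivAt
  have hF' : HasFDerivWithinAt (F θ) (0 : (Fin q → ℝ) →L[ℝ] ℝ)
      (Set.univ.pi fun _ : Fin q => Set.Ioi (0 : ℝ)) 0 := by
    refine .of_isLittleO (Asymptotics.isLittleO_iff.2 fun η hη => ?_)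
    have hnear := hφd.isLittleO.def (mul_pos hη hb)
    obtain ⟨δ, hδ, hball⟩ := Metric.eventually_nhds_iff.1 hnear
    have hsmall : ∀ᶠ ε : Fin q → ℝ in nhdsWithin 0 (Set.univ.pi fun _ => Set.Ioi (0 : ℝ)),
        ‖ε‖ < min δ 1 := by
      refine Filter.Eventually.filter_mono nhdsWithin_le_nhds ?_
      filter_upwards [Metric.ball_mem_nhds (0 : Fin q → ℝ) (lt_min hδ one_pos)] with ε hε
      simpa using hε
    filter_upwards [hsmall, self_mem_nhdsWithin] with ε hε hpos
    have hpos' : ∀ j, 0 < ε j := fun j => hpos j (Set.mem_univ j)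
    have hdist : ∀ τ ∈ ellipse τs ε, dist τ τs ≤ ‖ε‖ := fun τ hτ => by
      rw [dist_eq_norm]; exact norm_sub_le_of_mem_ellipse hpos' hτ
    have hpb : ∀ τ ∈ ellipse τs ε, b ≤ fT τ := fun τ hτ =>
      hbT τ (((hdist τ hτ).trans_lt hε).trans_le (min_le_right _ _))
    have hφA : ∀ τ ∈ ellipse τs ε, ‖φ τ - fderiv ℝ φ τs (τ - τs)‖ ≤ η * b * ‖ε‖ := by
      intro τ hτ
      have h := hball (((hdist τ hτ).trans_lt hε).trans_le (min_le_left _ _))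
      rw [hφ0, sub_zero] at h
      exact h.trans (mul_le_mul_of_nonneg_left
        (norm_sub_le_of_mem_ellipse hpos' hτ) (mul_pos hη hb).le)
    have hK := isCompact_ellipse (c := τs) hpos'
    have hV : 0 < volume.real (ellipse τs ε) := volume_ellipse_pos hpos'
    have hD : (∫ τ in ellipse τs ε, fT τ) ≠ 0 :=
      ((mul_pos hb hV).trans_le
        (setIntegral_ellipse_ge hpos' hfT_smooth.continuous hpb)).ne'
    have hincr : F θ ε - F θ 0 =
        (∫ τ in ellipse τs ε, φ τ) / ∫ τ in ellipse τs ε, fT τ := by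
      have hsplit : ∫ τ in ellipse τs ε, φ τ =
          (∫ τ in ellipse τs ε, f τ θ) - r * ∫ τ in ellipse τs ε, fT τ := by
        rw [← integral_const_mul]
        exact integral_sub (hf_diff.continuous.continuousOn.integrableOn_compact hK)
          ((continuous_const.mul hfT_smooth.continuous).continuousOn.integrableOn_compact hK)
      rw [hsplit, hFpos θ ε hpos', hF0, ← hr, sub_div, mul_div_cancel_right₀ _ hD]
      rfl
    have hmain := norm_integral_ratio_le hpos' hφ.continuous hfT_smooth.continuous
      (fderiv ℝ φ τs) hb hφA hpb
    rw [← hincr] at hmain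
    simp only [zero_apply, sub_zero]
    calc _ ≤ η * b * ‖ε‖ / b := hmain
      _ = η * ‖ε‖ := by field_simp
  have hzero : fderiv ℝ (F θ) 0 = 0 :=
    (uniqueDiffWithinAt_orthant q).eq hF.hasFDerivWithinAt hF'
  rw [hzero] at hF
  have hline : HasDerivAt (fun t : ℝ => (Pi.single i t : Fin q → ℝ)) (Pi.single i 1) 0 := by
    rw [hasDerivAt_pi]
    intro j
    by_cases h : j = i
    · subst h
      simpa using hasDerivAt_id' (0 : ℝ)
    · simpa [Pi.single_eq_of_ne h] using hasDerivAt_const (0 : ℝ) (0 : ℝ)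
  have hF0' : HasFDerivAt (F θ) (0 : (Fin q → ℝ) →L[ℝ] ℝ) (Pi.single i (0 : ℝ)) := by
    rwa [Pi.single_zero]
  exact (hF0'.comp_hasDerivAt (0 : ℝ) hline).deriv
end

section
/- For every θ ∈ ℝ^m and every i = 1,…,q, the second partial derivative in ε_i at ε = 0 of the map ε ↦ f^ε(θ|τ*) (extended to ε = 0 by f(θ|τ*)) equals ∂²_{ε_i} f^ε(θ|τ*)|_{ε=0} = (1/((q+2) f_T(τ*))) ( ∂²_{τ_i} f(τ*,θ) − (f(τ*,θ)/f_T(τ*)) ∂²_{τ_i} f_T(τ*) ). -/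
/-!
For `ε` in the open positive orthant the substitution `τ = τs + ε u` (coordinatewise) turns `F θ ε`
into `G ε = ∫_B f (τs + ε u) θ du / ∫_B fT (τs + ε u) du`, with `B` the Euclidean unit ball; the
Jacobians `∏ ε i` cancel (`setIntegral_ellipse`). The right-hand side makes sense and is continuous
for every `ε`, since `fT > 0`. As `F θ` is continuous too, `F θ = G` on the boundary ray
`{t eᵢ : t ≥ 0}`. Both sides are twice differentiable in `t`, so agreement on `[0, ∞)` identifies
their second derivatives at `0` (`deriv_deriv_eq_of_eqOn_Ici`).

The quotient `G (t eᵢ) = N t / D t` is differentiated under the integral sign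
(`hasDerivAt_moment`). At `t = 0` the first derivatives are multiples of `∫_B u i = 0`, and the second
ones are `∂ᵢ² f` and `∂ᵢ² fT` at `τs` times `∫_B (u i)² = |B| / (q + 2)` (`setIntegral_coord_sq`), which
follows from permutation symmetry and polar coordinates. The quotient rule gives the formula
(`hasDerivAt_ratio`).
-/

open MeasureTheory

/-- The closed Euclidean unit ball, as a subset of the coordinate space `Fin q → ℝ`
(whose own norm is the sup norm). -/
def unitEllipsoid (q : ℕ) : Set (Fin q → ℝ) := {u | ∑ i, (u i) ^ 2 ≤ 1}

lemma abs_le_one_of_mem_unitEllipsoid {q : ℕ} {u : Fin q → ℝ} (hu : u ∈ unitEllipsoid q)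
    (i : Fin q) : |u i| ≤ 1 := by
  have h1 : (u i) ^ 2 ≤ ∑ j, (u j) ^ 2 :=
    Finset.single_le_sum (f := fun j => (u j) ^ 2) (fun j _ => sq_nonneg _) (Finset.mem_univ i)
  have h2 : (u i) ^ 2 ≤ 1 := h1.trans hu
  exact (sq_le_one_iff_abs_le_one _).1 h2

lemma isCompact_unitEllipsoid (q : ℕ) : IsCompact (unitEllipsoid q) := by
  refine Metric.isCompact_of_isClosed_isBounded
    (isClosed_le (by fun_prop) continuous_const) ?_
  refine (Metric.isBounded_closedBall (x := (0 : Fin q → ℝ)) (r := 1)).subset fun u hu => ?_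
  rw [mem_closedBall_zero_iff, pi_norm_le_iff_of_nonneg zero_le_one]
  exact fun i => abs_le_one_of_mem_unitEllipsoid hu i

lemma measurableSet_unitEllipsoid (q : ℕ) : MeasurableSet (unitEllipsoid q) :=
  (isCompact_unitEllipsoid q).measurableSet

lemma volume_unitEllipsoid_pos (q : ℕ) : 0 < volume (unitEllipsoid q) := by
  have ho : IsOpen {u : Fin q → ℝ | ∑ i, (u i) ^ 2 < 1} :=
    isOpen_lt (by fun_prop) continuous_const
  refine (ho.measure_pos volume ⟨0, by simp⟩).trans_le (measure_mono fun u hu => ?_)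
  exact (Set.mem_ofPred_eq.mp hu : ∑ i, (u i) ^ 2 < 1).le

lemma setIntegral_unitEllipsoid_pos {q : ℕ} {h : (Fin q → ℝ) → ℝ} (hc : Continuous h)
    (hpos : ∀ u, 0 < h u) : 0 < ∫ u in unitEllipsoid q, h u := by
  rw [setIntegral_pos_iff_support_of_nonneg_ae
    (Filter.Eventually.of_forall fun u => (hpos u).le)
    (hc.continuousOn.integrableOn_compact (isCompact_unitEllipsoid q))]
  have : Function.support h = Set.univ := by
    ext u; simp [(hpos u).ne']
  rw [this, Set.univ_inter]
  exact volume_unitEllipsoid_pos q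

/-- The affine substitution `τ = τs + ε u` maps the unit ball onto the acceptance ellipse. -/
lemma setIntegral_ellipse {q : ℕ} (τs ε : Fin q → ℝ) (hε : ∀ i, 0 < ε i)
    (h : (Fin q → ℝ) → ℝ) :
    ∫ τ in {τ : Fin q → ℝ | ∑ i, ((τ i - τs i) / ε i) ^ 2 ≤ 1}, h τ =
      (∏ i, ε i) * ∫ u in unitEllipsoid q, h (fun i => τs i + ε i * u i) := by
  have himg : {τ : Fin q → ℝ | ∑ i, ((τ i - τs i) / ε i) ^ 2 ≤ 1} =
      (fun u : Fin q → ℝ => fun i => τs i + ε i * u i) '' unitEllipsoid q := by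
    ext τ
    constructor
    · intro hτ
      refine ⟨fun i => (τ i - τs i) / ε i, hτ, ?_⟩
      funext i
      have := (hε i).ne'
      field_simp
      ring
    · rintro ⟨u, hu, rfl⟩
      have : ∀ i, (τs i + ε i * u i - τs i) / ε i = u i := fun i => by
        have := (hε i).ne'
        field_simp
        ring
      simpa only [unitEllipsoid, Set.mem_ofPred_eq, this] using hu
  let L : (Fin q → ℝ) →L[ℝ] (Fin q → ℝ) :=
    LinearMap.toContinuousLinearMap (Matrix.toLin' (Matrix.diagonal ε))
  have hL : ∀ u, (fun i => τs i + ε i * u i) = τs + L u := by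
    intro u; funext i
    simp [L, Matrix.mulVec_diagonal]
  have hdet : |L.det| = ∏ i, ε i := by
    have : L.det = ∏ i, ε i := by
      simp [L, ContinuousLinearMap.det]
    rw [this, abs_of_pos (Finset.prod_pos fun i _ => hε i)]
  rw [himg, integral_image_eq_integral_abs_det_fderiv_smul volume
    (measurableSet_unitEllipsoid q) (f' := fun _ => L)]
  · simp [hdet, integral_const_mul]
  · intro u _
    rw [funext hL]
    exact (L.hasFDerivAt.const_add τs).hasFDerivWithinAt
  · intro u _ v _ huv
    funext i
    have := congrFun huv i
    have h0 := (hε i).ne'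
    simpa [h0] using this

/-- Differentiation under the integral sign along one coordinate. -/
lemma hasDerivAt_moment {q : ℕ} (i : Fin q) (p : ℕ) {k : ℝ → ℝ} (hk : ContDiff ℝ 1 k) (t₀ : ℝ) :
    HasDerivAt (fun t => ∫ u in unitEllipsoid q, u i ^ p * k (t * u i))
      (∫ u in unitEllipsoid q, u i ^ (p + 1) * deriv k (t₀ * u i)) t₀ := by
  have hk' : Continuous (deriv k) := hk.continuous_deriv le_rfl
  have hkc : Continuous k := hk.continuous
  obtain ⟨C, hC⟩ := (isCompact_Icc (a := -(|t₀| + 1)) (b := |t₀| + 1)).exists_bound_of_continuousOn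
    hk'.continuousOn
  have hcpt := isCompact_unitEllipsoid q
  refine (hasDerivAt_integral_of_dominated_loc_of_deriv_le (bound := fun _ => C)
    (F := fun t (u : Fin q → ℝ) => u i ^ p * k (t * u i))
    (F' := fun t (u : Fin q → ℝ) => u i ^ (p + 1) * deriv k (t * u i))
    (Metric.ball_mem_nhds t₀ one_pos) ?_ ?_ ?_ ?_ ?_ ?_).2
  · exact Filter.Eventually.of_forall fun t =>
      (Continuous.aestronglyMeasurable (by fun_prop))
  · exact (Continuous.continuousOn (by fun_prop)).integrableOn_compact hcpt
  · exact Continuous.aestronglyMeasurable (by fun_prop)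
  · refine (ae_restrict_iff' (measurableSet_unitEllipsoid q)).2 (.of_forall fun u hu t ht => ?_)
    have h1 := abs_le_one_of_mem_unitEllipsoid hu i
    have h2 : |t| ≤ |t₀| + 1 := by
      have : |t - t₀| < 1 := ht
      have := abs_add_le (t - t₀) t₀
      rw [sub_add_cancel] at this
      linarith
    have h3 : |t * u i| ≤ |t₀| + 1 := by
      rw [abs_mul]
      nlinarith [abs_nonneg t, abs_nonneg (u i)]
    have h4 := hC _ (abs_le.1 h3)
    rw [norm_mul, norm_pow]
    have h5 : ‖u i‖ ^ (p + 1) ≤ 1 := pow_le_one₀ (norm_nonneg _) h1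
    nlinarith [norm_nonneg (deriv k (t * u i)), pow_nonneg (norm_nonneg (u i)) (p + 1)]
  · exact continuousOn_const.integrableOn_compact hcpt
  · refine .of_forall fun u t _ => ?_
    have hd : HasDerivAt k (deriv k (t * u i)) (t * u i) :=
      (hk.differentiable one_ne_zero _).hasDerivAt
    have := (hd.comp t ((hasDerivAt_id t).mul_const (u i))).const_mul (u i ^ p)
    refine this.congr_deriv ?_
    ring

lemma setIntegral_coord_eq_zero {q : ℕ} (i : Fin q) :
    ∫ u in unitEllipsoid q, u i = 0 := by
  have h := (Measure.measurePreserving_neg (volume : Measure (Fin q → ℝ))).setIntegral_preimage_emb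
    (MeasurableEquiv.neg (Fin q → ℝ)).measurableEmbedding (fun u => u i) (unitEllipsoid q)
  have hpre : Neg.neg ⁻¹' unitEllipsoid q = unitEllipsoid q := by
    ext u; simp [unitEllipsoid]
  rw [hpre] at h
  simp only [Pi.neg_apply, integral_neg] at h
  linarith

lemma setIntegral_coord_sq_swap {q : ℕ} (i j : Fin q) :
    ∫ u in unitEllipsoid q, u i ^ 2 = ∫ u in unitEllipsoid q, u j ^ 2 := by
  have hmp := volume_measurePreserving_piCongrLeft (fun _ : Fin q => ℝ) (Equiv.swap i j)
  have happ : ∀ (u : Fin q → ℝ) l,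
      MeasurableEquiv.piCongrLeft (fun _ : Fin q => ℝ) (Equiv.swap i j) u l =
        u (Equiv.swap i j l) := by
    intro u l
    have := Equiv.piCongrLeft_apply_apply (fun _ : Fin q => ℝ) (Equiv.swap i j) u
      (Equiv.swap i j l)
    simpa [MeasurableEquiv.coe_piCongrLeft] using this
  have h := hmp.setIntegral_preimage_emb (MeasurableEquiv.measurableEmbedding _)
    (fun u => u j ^ 2) (unitEllipsoid q)
  have hpre : (MeasurableEquiv.piCongrLeft (fun _ : Fin q => ℝ) (Equiv.swap i j)) ⁻¹'
      unitEllipsoid q = unitEllipsoid q := by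
    ext u
    simp only [unitEllipsoid, Set.mem_preimage, Set.mem_ofPred_eq, happ]
    rw [Equiv.sum_comp (Equiv.swap i j) (fun l => u l ^ 2)]
  rw [hpre] at h
  simpa [happ] using h

/-- The integral of `|u| ^ (2 * p)` over the Euclidean unit ball, by polar coordinates on
`EuclideanSpace ℝ (Fin q)`. Only the ratio of the cases `p = 0` and `p = 1` matters, so the
volume of the ball is left unevaluated. -/
lemma setIntegral_radial {q : ℕ} (hq : 1 ≤ q) (p : ℕ) :
    ∫ u in unitEllipsoid q, (∑ j, u j ^ 2) ^ p =
      q * volume.real (Metric.ball (0 : EuclideanSpace ℝ (Fin q)) 1) / (q + 2 * p) := by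
  have : Nonempty (Fin q) := ⟨⟨0, hq⟩⟩
  have hmp := PiLp.volume_preserving_toLp (Fin q)
  have hpre : unitEllipsoid q =
      (WithLp.toLp 2) ⁻¹' (Metric.closedBall (0 : EuclideanSpace ℝ (Fin q)) 1) := by
    ext u
    simp [unitEllipsoid, EuclideanSpace.norm_eq, Real.sqrt_le_one]
  have h1 := hmp.setIntegral_preimage_emb (MeasurableEquiv.toLp 2 (Fin q → ℝ)).measurableEmbedding
    (fun x => (‖x‖ ^ 2) ^ p) (Metric.closedBall (0 : EuclideanSpace ℝ (Fin q)) 1)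
  rw [← hpre] at h1
  have h2 : ∀ u : Fin q → ℝ, ‖(WithLp.toLp 2 u : EuclideanSpace ℝ (Fin q))‖ ^ 2 = ∑ j, u j ^ 2 := by
    intro u
    simp [EuclideanSpace.norm_sq_eq]
  simp only [h2] at h1
  rw [h1, ← integral_indicator Metric.isClosed_closedBall.measurableSet]
  have h3 : ∀ x : EuclideanSpace ℝ (Fin q),
      (Metric.closedBall (0 : EuclideanSpace ℝ (Fin q)) 1).indicator
        (fun x => (∑ j, x j ^ 2) ^ p) x = (Set.Iic (1:ℝ)).indicator (fun r => (r ^ 2) ^ p) ‖x‖ := by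
    intro x
    simp [Set.indicator, EuclideanSpace.norm_sq_eq]
  rw [funext h3]
  rw [integral_fun_norm_addHaar volume ((Set.Iic (1:ℝ)).indicator (fun r => (r ^ 2) ^ p))]
  have h4 : ∫ y in Set.Ioi (0:ℝ), y ^ (q - 1) • (Set.Iic (1:ℝ)).indicator (fun r => (r ^ 2) ^ p) y
      = 1 / (q + 2 * p) := by
    have : ∀ y : ℝ, y ^ (q - 1) • (Set.Iic (1:ℝ)).indicator (fun r => (r ^ 2) ^ p) y =
        (Set.Iic (1:ℝ)).indicator (fun r => r ^ (q - 1 + 2 * p)) y := by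
      intro y
      by_cases hy : y ≤ 1 <;> simp [hy, pow_add, pow_mul]
    simp only [this]
    rw [setIntegral_indicator measurableSet_Iic, Set.Ioi_inter_Iic,
      ← intervalIntegral.integral_of_le zero_le_one, integral_pow]
    have : ((q - 1 + 2 * p : ℕ) : ℝ) + 1 = q + 2 * p := by
      push_cast [Nat.cast_sub hq]; ring
    rw [this]
    simp
  simp only [finrank_euclideanSpace, Fintype.card_fin]
  rw [h4]
  simp
  ring

/-- By permutation symmetry, `u i ^ 2` has the same integral over the ball as `|u| ^ 2 / q`. -/
lemma setIntegral_coord_sq {q : ℕ} (i : Fin q) :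
    ∫ u in unitEllipsoid q, u i ^ 2 = (∫ _u in unitEllipsoid q, (1 : ℝ)) / (q + 2) := by
  have hq : 1 ≤ q := i.pos
  have hq' : (0 : ℝ) < q := by exact_mod_cast hq
  have h0 := setIntegral_radial hq 0
  have h1 := setIntegral_radial hq 1
  simp only [pow_zero, pow_one] at h0 h1
  rw [integral_finsetSum] at h1
  · simp only [setIntegral_coord_sq_swap _ i, Finset.sum_const, Finset.card_univ,
      Fintype.card_fin, nsmul_eq_mul] at h1
    rw [h0]
    simp only [Nat.cast_zero, Nat.cast_one, mul_zero, mul_one, add_zero] at h1 ⊢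
    field_simp at h1 ⊢
    linarith
  · intro j _
    exact (Continuous.continuousOn (by fun_prop)).integrableOn_compact (isCompact_unitEllipsoid q)

/-- The two-sided second derivative at `0` of a `C²` function `φ` is determined by its values on
`[0, ∞)`. -/
lemma deriv_deriv_eq_of_eqOn_Ici {φ ψ ψ' : ℝ → ℝ} {c : ℝ} (hφ : ContDiff ℝ 2 φ)
    (hψ : ∀ t, HasDerivAt ψ (ψ' t) t) (hψ' : HasDerivAt ψ' c 0)
    (heq : ∀ t, 0 ≤ t → φ t = ψ t) : deriv (deriv φ) 0 = c := by
  have h1 : ∀ t, 0 ≤ t → deriv φ t = ψ' t := by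
    intro t ht
    have hd := ((hφ.differentiable two_ne_zero) t).hasDerivAt.hasDerivWithinAt (s := Set.Ici 0)
    exact (uniqueDiffOn_Ici (0 : ℝ) t ht).eq_deriv _ hd
      ((hψ t).hasDerivWithinAt.congr heq (heq t ht))
  have hφ' : ContDiff ℝ 1 (deriv φ) := ((contDiff_succ_iff_deriv (n := 1)).1 hφ).2.2
  have hd := ((hφ'.differentiable one_ne_zero) 0).hasDerivAt.hasDerivWithinAt (s := Set.Ici 0)
  exact (uniqueDiffOn_Ici (0 : ℝ) 0 Set.self_mem_Ici).eq_deriv _ hd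
    (hψ'.hasDerivWithinAt.congr h1 (h1 0 le_rfl))

/-- The second derivative at `0` of the quotient of the integrals of `k (t * u i)` and `l (t * u i)`
over the unit ball. The first derivatives of both integrals vanish at `0` because the ball is
symmetric, and the second moment of `u i` supplies the factor `1 / (q + 2)`. -/
lemma hasDerivAt_ratio {q : ℕ} (i : Fin q) {k l : ℝ → ℝ} (hk : ContDiff ℝ 2 k)
    (hl : ContDiff ℝ 2 l) (hlpos : ∀ s, 0 < l s) :
    ∃ ψ' : ℝ → ℝ,
      (∀ t, HasDerivAt (fun t => (∫ u in unitEllipsoid q, k (t * u i)) /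
        ∫ u in unitEllipsoid q, l (t * u i)) (ψ' t) t) ∧
      HasDerivAt ψ' ((1 / (((q : ℝ) + 2) * l 0)) *
        (deriv (deriv k) 0 - (k 0 / l 0) * deriv (deriv l) 0)) 0 := by
  have h1 : ∀ {k : ℝ → ℝ}, ContDiff ℝ 2 k → ∀ t,
      HasDerivAt (fun t => ∫ u in unitEllipsoid q, k (t * u i))
        (∫ u in unitEllipsoid q, u i ^ 1 * deriv k (t * u i)) t := by
    intro k hk t
    simpa using hasDerivAt_moment i 0 (hk.of_le one_le_two) t
  have h2 : ∀ {k : ℝ → ℝ}, ContDiff ℝ 2 k → ∀ t,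
      HasDerivAt (fun t => ∫ u in unitEllipsoid q, u i ^ 1 * deriv k (t * u i))
        (∫ u in unitEllipsoid q, u i ^ 2 * deriv (deriv k) (t * u i)) t := by
    intro k hk t
    exact hasDerivAt_moment i 1 ((contDiff_succ_iff_deriv (n := 1)).1 hk).2.2 t
  have hpos : ∀ t, 0 < ∫ u in unitEllipsoid q, l (t * u i) := fun t =>
    setIntegral_unitEllipsoid_pos (hl.continuous.comp (by fun_prop)) fun u => hlpos _
  refine ⟨_, fun t => (h1 hk t).div (h1 hl t) (hpos t).ne', ?_⟩
  have h3 := (((h2 hk 0).mul (h1 hl 0)).sub ((h1 hk 0).mul (h2 hl 0))).div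
    ((h1 hl 0).pow 2) (pow_ne_zero 2 (hpos 0).ne')
  refine h3.congr_deriv ?_
  have hV : 0 < ∫ _u in unitEllipsoid q, (1 : ℝ) :=
    setIntegral_unitEllipsoid_pos continuous_const fun _ => one_pos
  have hc : ∀ c : ℝ, ∫ _u in unitEllipsoid q, c = (∫ _u in unitEllipsoid q, (1 : ℝ)) * c := by
    intro c
    rw [← integral_mul_const]; simp
  simp only [Pi.mul_apply, Pi.sub_apply, Pi.pow_apply, zero_mul, pow_one, integral_mul_const,
    setIntegral_coord_eq_zero, setIntegral_coord_sq]
  rw [hc (k 0), hc (l 0)]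
  generalize (∫ _u in unitEllipsoid q, (1 : ℝ)) = V at hV ⊢
  have := (hlpos 0).ne'
  field_simp
  ring

/-- For every θ and every i, the second partial derivative in ε_i at ε = 0 of
the map ε ↦ f^ε(θ|τ*) (extended to ε = 0 by f(θ|τ*)) equals
(1/((q+2) f_T(τ*))) (∂²_{τ_i} f(τ*,θ) − (f(τ*,θ)/f_T(τ*)) ∂²_{τ_i} f_T(τ*)). -/
theorem abc_second_derivative_diagonal
    (q m : ℕ) (hq : 1 ≤ q) (hm : 1 ≤ m)
    (τs : Fin q → ℝ)
    (f : (Fin q → ℝ) → (Fin m → ℝ) → ℝ)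
    (hf_smooth : ContDiff ℝ (⊤ : ℕ∞) (fun p : (Fin q → ℝ) × (Fin m → ℝ) => f p.1 p.2))
    (hf_pos : ∀ τ θ, 0 < f τ θ)
    (hf_int : ∀ τ, Integrable (f τ))
    (fT : (Fin q → ℝ) → ℝ)
    (hfT : ∀ τ, fT τ = ∫ θ, f τ θ)
    (hfT_smooth : ContDiff ℝ (⊤ : ℕ∞) fT)
    (hfT_bdd : ∃ c > 0, ∀ τ ∈ Metric.ball τs 1, c ≤ fT τ)
    (hdom : ∃ g : (Fin m → ℝ) → ℝ, Integrable g ∧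
      ∀ k : ℕ, k ≤ 6 → ∀ τ ∈ Metric.ball τs 1, ∀ θ,
        ‖iteratedFDeriv ℝ k (fun τ' => f τ' θ) τ‖ ≤ g θ)
    -- F θ is the map ε ↦ f^ε(θ|τ*) extended to ε = 0 by the posterior f(θ|τ*)
    (F : (Fin m → ℝ) → (Fin q → ℝ) → ℝ)
    (hF0 : ∀ θ, F θ 0 = f τs θ / fT τs)
    (hFpos : ∀ θ (ε : Fin q → ℝ), (∀ i, 0 < ε i) →
      F θ ε = (∫ τ in {τ : Fin q → ℝ | ∑ i, ((τ i - τs i) / ε i) ^ 2 ≤ 1}, f τ θ) /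
              (∫ τ in {τ : Fin q → ℝ | ∑ i, ((τ i - τs i) / ε i) ^ 2 ≤ 1}, fT τ))
    (hFC2 : ∀ θ, ContDiff ℝ 2 (F θ)) :
    ∀ (θ : Fin m → ℝ) (i : Fin q),
      deriv (deriv (fun t : ℝ => F θ (Pi.single i t))) 0 =
        (1 / (((q : ℝ) + 2) * fT τs)) *
          (deriv (deriv (fun t => f (Function.update τs i t) θ)) (τs i) -
            (f τs θ / fT τs) *
              deriv (deriv (fun t => fT (Function.update τs i t))) (τs i)) := by
  intro θ i
  have hfT_pos : ∀ τ, 0 < fT τ := by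
    intro τ
    rw [hfT, integral_pos_iff_support_of_nonneg (fun θ => (hf_pos τ θ).le) (hf_int τ)]
    have : Function.support (f τ) = Set.univ := by
      ext θ; simp [(hf_pos τ θ).ne']
    rw [this]
    exact isOpen_univ.measure_pos volume Set.univ_nonempty
  have hfθ : ContDiff ℝ (⊤ : ℕ∞) (fun τ => f τ θ) :=
    hf_smooth.comp (contDiff_id.prodMk contDiff_const)
  have hupd : ContDiff ℝ (⊤ : ℕ∞) (fun s : ℝ => Function.update τs i (τs i + s)) :=
    (contDiff_update _ τs i).comp (contDiff_const.add contDiff_id)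
  have hk : ContDiff ℝ 2 (fun s : ℝ => f (Function.update τs i (τs i + s)) θ) :=
    (hfθ.comp hupd).of_le (WithTop.coe_le_coe.2 (le_top : (2 : ℕ∞) ≤ ⊤))
  have hl : ContDiff ℝ 2 (fun s : ℝ => fT (Function.update τs i (τs i + s))) :=
    (hfT_smooth.comp hupd).of_le (WithTop.coe_le_coe.2 (le_top : (2 : ℕ∞) ≤ ⊤))
  obtain ⟨ψ', hψ, hψ'⟩ := hasDerivAt_ratio i hk hl fun s => hfT_pos _
  -- `fun t => f (update τs i (τs i + t)) θ` is a translate of `fun t => f (update τs i t) θ`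
  have hshift : ∀ g : ℝ → ℝ,
      deriv (deriv fun s => g (τs i + s)) 0 = deriv (deriv g) (τs i) := by
    intro g
    have : (deriv fun s => g (τs i + s)) = fun s => deriv g (τs i + s) := by
      funext s; exact deriv_comp_const_add _ _ _
    rw [this, deriv_comp_const_add, add_zero]
  rw [hshift fun t => f (Function.update τs i t) θ,
    hshift fun t => fT (Function.update τs i t)] at hψ'
  simp only [add_zero, Function.update_eq_self] at hψ'
  refine deriv_deriv_eq_of_eqOn_Ici
    ((hFC2 θ).comp ((contDiff_single (𝕜 := ℝ) (F' := fun _ : Fin q => ℝ) 2 i))) hψ hψ' ?_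
  intro t ht
  -- Approach `t eᵢ` through the open positive orthant, along `t eᵢ + δ (1, …, 1)`.
  let G : ℝ → ℝ := fun δ =>
    (∫ u in unitEllipsoid q, f (fun j => τs j + ((Pi.single i t : Fin q → ℝ) j + δ) * u j) θ) /
      ∫ u in unitEllipsoid q, fT (fun j => τs j + ((Pi.single i t : Fin q → ℝ) j + δ) * u j)
  have hGc : Continuous G := by
    refine Continuous.div ?_ ?_ fun δ => (setIntegral_unitEllipsoid_pos ?_ fun u => hfT_pos _).ne'
    · refine continuous_parametric_integral_of_continuous (μ := volume) (f := fun δ u =>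
        f (fun j => τs j + ((Pi.single i t : Fin q → ℝ) j + δ) * u j) θ) ?_
        (isCompact_unitEllipsoid q)
      exact hfθ.continuous.comp (g := fun τ => f τ θ)
        (f := fun (x : ℝ × (Fin q → ℝ)) j => τs j + ((Pi.single i t : Fin q → ℝ) j + x.1) * x.2 j)
        (by fun_prop)
    · refine continuous_parametric_integral_of_continuous (μ := volume) (f := fun δ u =>
        fT (fun j => τs j + ((Pi.single i t : Fin q → ℝ) j + δ) * u j)) ?_
        (isCompact_unitEllipsoid q)
      exact hfT_smooth.continuous.comp
        (f := fun (x : ℝ × (Fin q → ℝ)) j => τs j + ((Pi.single i t : Fin q → ℝ) j + x.1) * x.2 j)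
        (by fun_prop)
    · exact hfT_smooth.continuous.comp (by fun_prop)
  let P : ℝ → ℝ := fun δ => F θ (fun j => (Pi.single i t : Fin q → ℝ) j + δ)
  have hPc : Continuous P := (hFC2 θ).continuous.comp (by fun_prop)
  have hPG : Set.EqOn P G (Set.Ioi 0) := by
    intro δ hδ
    have hδ' : (0 : ℝ) < δ := hδ
    have hpos : ∀ j, 0 < (Pi.single i t : Fin q → ℝ) j + δ := by
      intro j
      have : 0 ≤ (Pi.single i t : Fin q → ℝ) j := by
        by_cases hj : j = i
        · subst hj; simpa using ht
        · simp [hj]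
      linarith
    simp only [P, G]
    rw [hFpos θ _ hpos, setIntegral_ellipse τs _ hpos (fun τ => f τ θ),
      setIntegral_ellipse τs _ hpos fT,
      mul_div_mul_left _ _ (Finset.prod_pos fun j _ => hpos j).ne']
  have h0 : P 0 = G 0 := by
    have := hPG.closure hPc hGc
    rw [closure_Ioi] at this
    exact this (Set.mem_Ici.2 le_rfl)
  have hpt : ∀ u : Fin q → ℝ, (fun j => τs j + (Pi.single i t : Fin q → ℝ) j * u j) =
      Function.update τs i (τs i + t * u i) := by
    intro u; funext j
    by_cases hj : j = i
    · subst hj; simp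
    · simp [hj]
  simpa only [P, G, add_zero, hpt] using h0
end

section
/- For every θ ∈ ℝ^m and all indices i ≠ j in {1,…,q}, the mixed second partial derivative in (ε_i, ε_j) at ε = 0 of the map ε ↦ f^ε(θ|τ*) (extended to ε = 0 by f(θ|τ*)) vanishes: ∂²_{ε_i ε_j} f^ε(θ|τ*)|_{ε=0} = 0. -/
/-!
For `ε` in the open positive orthant, the substitution `τ = τs + ε * u` (coordinatewise product)
turns the integral of `h` over the ellipse into `(∏ i, ε i) * scaledMean τs h ε`, where
`scaledMean τs h ε` integrates `h (τs + ε * u)` over the Euclidean unit ball. The factor `∏ i, ε i`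
cancels in the quotient, so `F θ` agrees on the orthant with
`G = scaledMean τs (f · θ) / scaledMean τs fT`. The function `G` is defined for all `ε`, smooth
(`contDiff_scaledMean`), and even in each coordinate because the ball is invariant under
reflections (`scaledMean_reflect`).

Hence `∂ G / ∂ ε_j` vanishes on the hyperplane `ε_j = 0`, and in particular the mixed derivative of
`G` at the origin is zero. The difference `F θ - G` is `C²` and vanishes on the open orthant, whose
closure contains `0`, so its second derivative at `0` is zero as well
(`fderiv_fderiv_eq_zero_of_orthant`).
-/

open MeasureTheory

/-- The closed Euclidean unit ball, as a subset of `Fin q → ℝ` (whose own norm is the sup norm). -/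
def unitEllipse (q : ℕ) : Set (Fin q → ℝ) := {u | ∑ i, u i ^ 2 ≤ 1}

/-- The unnormalised average of `h` over the ellipse centred at `τs` with semi-axes `ε`, written as
an integral over the fixed unit ball; it makes sense for every `ε`, including negative and zero
entries. -/
noncomputable def scaledMean {q : ℕ} (τs : Fin q → ℝ) (h : (Fin q → ℝ) → ℝ) (ε : Fin q → ℝ) : ℝ :=
  ∫ u in unitEllipse q, h (τs + ε * u)

lemma isClosed_unitEllipse (q : ℕ) : IsClosed (unitEllipse q) :=
  isClosed_le (by fun_prop) continuous_const

lemma unitEllipse_subset (q : ℕ) : unitEllipse q ⊆ Metric.closedBall 0 1 := by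
  intro u hu
  rw [mem_closedBall_zero_iff, pi_norm_le_iff_of_nonneg zero_le_one]
  intro i
  have h1 : u i ^ 2 ≤ ∑ i, u i ^ 2 :=
    Finset.single_le_sum (f := fun i => u i ^ 2) (fun _ _ => sq_nonneg _) (Finset.mem_univ i)
  have h2 : u i ^ 2 ≤ 1 := h1.trans hu
  rw [Real.norm_eq_abs]
  exact (sq_le_one_iff_abs_le_one _).1 h2

lemma isCompact_unitEllipse (q : ℕ) : IsCompact (unitEllipse q) :=
  (isCompact_closedBall 0 1).of_isClosed_subset (isClosed_unitEllipse q) (unitEllipse_subset q)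

lemma volume_unitEllipse_pos (q : ℕ) : 0 < volume (unitEllipse q) := by
  have ho : IsOpen {u : Fin q → ℝ | ∑ i, u i ^ 2 < 1} :=
    isOpen_lt (by fun_prop) continuous_const
  have h0 : (0 : Fin q → ℝ) ∈ {u : Fin q → ℝ | ∑ i, u i ^ 2 < 1} := by simp
  refine (ho.measure_pos volume ⟨0, h0⟩).trans_le (measure_mono ?_)
  exact fun u (hu : ∑ i, u i ^ 2 < 1) => hu.le

/-- Multiplying the integrand by a smooth bump that is `1` on the unit ball exhibits `scaledMean` as
the value at `0` of a convolution depending smoothly on the parameter `ε`. -/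
lemma contDiff_scaledMean {q : ℕ} (τs : Fin q → ℝ) {h : (Fin q → ℝ) → ℝ}
    (hh : ContDiff ℝ (⊤ : ℕ∞) h) : ContDiff ℝ (⊤ : ℕ∞) (scaledMean τs h) := by
  let χ : ContDiffBump (0 : Fin q → ℝ) := ⟨1, 2, one_pos, one_lt_two⟩
  let g : (Fin q → ℝ) → (Fin q → ℝ) → ℝ := fun p x => χ x * h (τs - p * x)
  let φ : (Fin q → ℝ) → ℝ := (unitEllipse q).indicator fun _ => 1
  have hφ : LocallyIntegrable φ volume := by
    refine Integrable.locallyIntegrable ?_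
    refine (integrable_indicator_iff (isClosed_unitEllipse q).measurableSet).2 ?_
    exact integrableOn_const (isCompact_unitEllipse q).measure_lt_top.ne
  have hg : ContDiff ℝ (⊤ : ℕ∞) (Function.uncurry g) := by
    have h1 : ContDiff ℝ (⊤ : ℕ∞) fun x : (Fin q → ℝ) × (Fin q → ℝ) => χ x.2 :=
      χ.contDiff.comp contDiff_snd
    have h2 : ContDiff ℝ (⊤ : ℕ∞) fun x : (Fin q → ℝ) × (Fin q → ℝ) => h (τs - x.1 * x.2) :=
      hh.comp (contDiff_const.sub (contDiff_fst.mul contDiff_snd))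
    exact h1.mul h2
  have key := contDiffOn_convolution_right_with_param (μ := volume) (f := φ) (n := (⊤ : ℕ∞))
    (ContinuousLinearMap.mul ℝ ℝ) (g := g) (s := Set.univ) (k := Metric.closedBall 0 2)
    isOpen_univ (isCompact_closedBall 0 2)
    (by
      intro p x _ hx
      have : χ x = 0 := χ.zero_of_le_dist (le_of_lt (by simpa using hx))
      simp [g, this])
    hφ hg.contDiffOn
  rw [Set.univ_prod_univ, contDiffOn_univ] at key
  have h3 := key.comp (contDiff_id.prodMk (contDiff_const (c := (0 : Fin q → ℝ))))
  convert h3 using 1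
  funext ε
  simp only [scaledMean, Function.comp, MeasureTheory.convolution_def,
    ContinuousLinearMap.mul_apply', id]
  rw [← integral_indicator (isClosed_unitEllipse q).measurableSet]
  congr 1
  funext u
  by_cases hu : u ∈ unitEllipse q
  · have : χ (-u) = 1 := χ.one_of_mem_closedBall (by simpa using unitEllipse_subset q hu)
    simp [φ, g, hu, this]
  · simp [φ, hu]

lemma scaledMean_pos {q : ℕ} (τs : Fin q → ℝ) {h : (Fin q → ℝ) → ℝ} (hc : Continuous h)
    (hpos : ∀ τ, 0 < h τ) (ε : Fin q → ℝ) : 0 < scaledMean τs h ε := by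
  rw [scaledMean, setIntegral_pos_iff_support_of_nonneg_ae]
  · have : Function.support (fun u => h (τs + ε * u)) = Set.univ :=
      Set.eq_univ_of_forall fun u => (hpos _).ne'
    rw [this, Set.univ_inter]
    exact volume_unitEllipse_pos q
  · exact Filter.Eventually.of_forall fun u => (hpos _).le
  · exact ContinuousOn.integrableOn_compact (isCompact_unitEllipse q) (by fun_prop)

/-- `scaledMean` is even in each coordinate of `ε`: reflecting the integration variable in the
`j`-th coordinate preserves both Lebesgue measure and the unit ball. -/
lemma scaledMean_reflect {q : ℕ} (τs : Fin q → ℝ) (h : (Fin q → ℝ) → ℝ) (j : Fin q)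
    {ε ε' : Fin q → ℝ} (hj : ε' j = -ε j) (hne : ∀ k, k ≠ j → ε' k = ε k) :
    scaledMean τs h ε' = scaledMean τs h ε := by
  let r : ∀ k : Fin q, ℝ ≃ᵐ ℝ := fun k => if k = j then MeasurableEquiv.neg ℝ else .refl ℝ
  let R : (Fin q → ℝ) ≃ᵐ (Fin q → ℝ) := MeasurableEquiv.piCongrRight r
  have hRj : ∀ u, R u j = -u j := fun u => by simp [R, r, MeasurableEquiv.piCongrRight]
  have hRne : ∀ u k, k ≠ j → R u k = u k := fun u k hk => by
    simp [R, r, MeasurableEquiv.piCongrRight, hk]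
  have hR : MeasurePreserving R volume volume := by
    refine volume_preserving_pi (f := fun k => r k) fun k => ?_
    by_cases hk : k = j
    · simp only [r, if_pos hk]
      exact Measure.measurePreserving_neg _
    · simp only [r, if_neg hk]
      exact MeasurePreserving.id _
  have hpre : R ⁻¹' unitEllipse q = unitEllipse q := by
    ext u
    have : ∑ i, R u i ^ 2 = ∑ i, u i ^ 2 := Finset.sum_congr rfl fun k _ => by
      by_cases hk : k = j
      · subst hk; rw [hRj]; ring
      · rw [hRne u k hk]
    simp only [unitEllipse, Set.mem_preimage, Set.mem_ofPred_eq, this]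
  have := hR.setIntegral_preimage_emb R.measurableEmbedding
    (fun u => h (τs + ε * u)) (unitEllipse q)
  rw [hpre] at this
  rw [scaledMean, scaledMean, ← this]
  congr 1
  funext u
  congr 1
  funext k
  by_cases hk : k = j
  · subst hk; simp [hRj, hj]
  · simp [hRne u k hk, hne k hk]

lemma integral_ellipse {q : ℕ} (τs : Fin q → ℝ) (h : (Fin q → ℝ) → ℝ) {ε : Fin q → ℝ}
    (hε : ∀ i, 0 < ε i) :
    ∫ τ in {τ : Fin q → ℝ | ∑ i, ((τ i - τs i) / ε i) ^ 2 ≤ 1}, h τ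
      = (∏ i, ε i) * scaledMean τs h ε := by
  have hprod : 0 < ∏ i, ε i := Finset.prod_pos fun i _ => hε i
  have hdet : (Matrix.diagonal ε).det ≠ 0 := by rw [Matrix.det_diagonal]; exact hprod.ne'
  have hlin : ∀ u, Matrix.toLin' (Matrix.diagonal ε) u = ε * u := fun u => by
    funext k; simp [Matrix.mulVec_diagonal]
  have hemb : MeasurableEmbedding (Matrix.toLin' (Matrix.diagonal ε)) := by
    refine Continuous.measurableEmbedding (LinearMap.continuous_of_finiteDimensional _) ?_
    intro u v huv
    rw [hlin, hlin] at huv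
    funext k
    exact mul_left_cancel₀ (hε k).ne' (congrFun huv k)
  have hms : MeasurableSet {τ : Fin q → ℝ | ∑ i, ((τ i - τs i) / ε i) ^ 2 ≤ 1} :=
    (isClosed_le (by fun_prop) continuous_const).measurableSet
  rw [← integral_indicator hms, ← integral_add_left_eq_self _ τs,
    ← Real.smul_map_diagonal_volume_pi hdet, integral_smul_measure, hemb.integral_map,
    scaledMean, ← integral_indicator (isClosed_unitEllipse q).measurableSet,
    Matrix.det_diagonal, abs_of_pos hprod, ENNReal.toReal_ofReal hprod.le, smul_eq_mul]
  congr 2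
  funext u
  have hiff : τs + ε * u ∈ {τ : Fin q → ℝ | ∑ i, ((τ i - τs i) / ε i) ^ 2 ≤ 1}
      ↔ u ∈ unitEllipse q := by
    have : ∀ i, (ε i * u i) / ε i = u i := fun i => mul_div_cancel_left₀ _ (hε i).ne'
    simp [unitEllipse, this]
  rw [hlin]
  by_cases hu : u ∈ unitEllipse q
  · rw [Set.indicator_of_mem (hiff.2 hu), Set.indicator_of_mem hu]
  · rw [Set.indicator_of_notMem (fun h' => hu (hiff.1 h')), Set.indicator_of_notMem hu]

/-- A `C²` function vanishing on the open positive orthant has zero second derivative at the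
origin: the second derivative vanishes on the orthant, and the origin is a limit of points
`(t, …, t)` with `t > 0`. -/
lemma fderiv_fderiv_eq_zero_of_orthant {q : ℕ} {H : (Fin q → ℝ) → ℝ} (hH : ContDiff ℝ 2 H)
    (h0 : ∀ ε : Fin q → ℝ, (∀ i, 0 < ε i) → H ε = 0) : fderiv ℝ (fderiv ℝ H) 0 = 0 := by
  have ho : IsOpen {ε : Fin q → ℝ | ∀ i, 0 < ε i} := by
    simp only [Set.ofPred_forall]
    exact isOpen_iInter_of_finite fun i => isOpen_lt continuous_const (continuous_apply i)
  have h1 : ∀ ε : Fin q → ℝ, (∀ i, 0 < ε i) → fderiv ℝ H ε = 0 := fun ε hε => by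
    have : H =ᶠ[nhds ε] fun _ => 0 := by
      filter_upwards [ho.mem_nhds hε] with x hx using h0 x hx
    rw [this.fderiv_eq, fderiv_fun_const, Pi.zero_apply]
  have h2 : ∀ ε : Fin q → ℝ, (∀ i, 0 < ε i) → fderiv ℝ (fderiv ℝ H) ε = 0 := fun ε hε => by
    have : fderiv ℝ H =ᶠ[nhds ε] fun _ => 0 := by
      filter_upwards [ho.mem_nhds hε] with x hx using h1 x hx
    rw [this.fderiv_eq, fderiv_fun_const, Pi.zero_apply]
  have hC1 : ContDiff ℝ 1 (fderiv ℝ H) := hH.fderiv_right (by norm_num)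
  have hcont : Continuous fun t : ℝ => fderiv ℝ (fderiv ℝ H) (fun _ : Fin q => t) :=
    (hC1.continuous_fderiv one_ne_zero).comp (continuous_pi fun _ => continuous_id)
  have hlim := (hcont.tendsto 0).mono_left (nhdsWithin_le_nhds (s := Set.Ioi 0))
  have hzero : Filter.Tendsto (fun t : ℝ => fderiv ℝ (fderiv ℝ H) (fun _ : Fin q => t))
      (nhdsWithin 0 (Set.Ioi 0)) (nhds 0) := by
    refine tendsto_const_nhds.congr' ?_
    filter_upwards [self_mem_nhdsWithin] with t ht
    exact (h2 _ fun _ => ht).symm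
  exact tendsto_nhds_unique hlim hzero

lemma deriv_zero_of_even {φ : ℝ → ℝ} (h : ∀ s, φ (-s) = φ s) : deriv φ 0 = 0 := by
  have h1 := deriv_comp_neg φ 0
  simp only [h, neg_zero] at h1
  linarith

lemma hasDerivAt_pi_single {q : ℕ} (i : Fin q) (x : ℝ) :
    HasDerivAt (fun t : ℝ => (Pi.single i t : Fin q → ℝ)) (Pi.single i 1) x := by
  refine hasDerivAt_pi.2 fun k => ?_
  by_cases hk : k = i
  · subst hk; simpa using hasDerivAt_id' x
  · simpa [hk] using hasDerivAt_const x (0 : ℝ)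

/-- For every θ and all i ≠ j, the mixed second partial derivative in
(ε_i, ε_j) at ε = 0 of the map ε ↦ f^ε(θ|τ*) (extended to ε = 0 by f(θ|τ*)) vanishes. -/
theorem abc_second_derivative_mixed_vanishes
    (q m : ℕ) (hq : 1 ≤ q) (hm : 1 ≤ m)
    (τs : Fin q → ℝ)
    (f : (Fin q → ℝ) → (Fin m → ℝ) → ℝ)
    (hf_smooth : ContDiff ℝ (⊤ : ℕ∞) (fun p : (Fin q → ℝ) × (Fin m → ℝ) => f p.1 p.2))
    (hf_pos : ∀ τ θ, 0 < f τ θ)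
    (hf_int : ∀ τ, Integrable (f τ))
    (fT : (Fin q → ℝ) → ℝ)
    (hfT : ∀ τ, fT τ = ∫ θ, f τ θ)
    (hfT_smooth : ContDiff ℝ (⊤ : ℕ∞) fT)
    (hfT_bdd : ∃ c > 0, ∀ τ ∈ Metric.ball τs 1, c ≤ fT τ)
    (hdom : ∃ g : (Fin m → ℝ) → ℝ, Integrable g ∧
      ∀ k : ℕ, k ≤ 6 → ∀ τ ∈ Metric.ball τs 1, ∀ θ,
        ‖iteratedFDeriv ℝ k (fun τ' => f τ' θ) τ‖ ≤ g θ)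
    -- F θ is the map ε ↦ f^ε(θ|τ*) extended to ε = 0 by the posterior f(θ|τ*)
    (F : (Fin m → ℝ) → (Fin q → ℝ) → ℝ)
    (hF0 : ∀ θ, F θ 0 = f τs θ / fT τs)
    (hFpos : ∀ θ (ε : Fin q → ℝ), (∀ i, 0 < ε i) →
      F θ ε = (∫ τ in {τ : Fin q → ℝ | ∑ i, ((τ i - τs i) / ε i) ^ 2 ≤ 1}, f τ θ) /
              (∫ τ in {τ : Fin q → ℝ | ∑ i, ((τ i - τs i) / ε i) ^ 2 ≤ 1}, fT τ))
    (hFC2 : ∀ θ, ContDiff ℝ 2 (F θ)) :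
    ∀ (θ : Fin m → ℝ) (i j : Fin q), i ≠ j →
      deriv (fun t : ℝ =>
          deriv (fun s : ℝ => F θ (Pi.single i t + Pi.single j s)) 0) 0 = 0 := by
  intro θ i j hij
  have hfθ : ContDiff ℝ (⊤ : ℕ∞) fun τ => f τ θ :=
    hf_smooth.comp (contDiff_id.prodMk (contDiff_const (c := θ)))
  have hfT_pos : ∀ τ, 0 < fT τ := fun τ => by
    rw [hfT, integral_pos_iff_support_of_nonneg (fun θ => (hf_pos τ θ).le) (hf_int τ)]
    have : Function.support (f τ) = Set.univ :=
      Set.eq_univ_of_forall fun θ => (hf_pos τ θ).ne'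
    rw [this]
    exact isOpen_univ.measure_pos volume Set.univ_nonempty
  have hD := scaledMean_pos τs hfT_smooth.continuous hfT_pos
  set G : (Fin q → ℝ) → ℝ := fun ε => scaledMean τs (fun τ => f τ θ) ε / scaledMean τs fT ε
    with hGdef
  have hG : ContDiff ℝ 2 G :=
    ((contDiff_scaledMean τs hfθ).div (contDiff_scaledMean τs hfT_smooth)
      fun ε => (hD ε).ne').of_le (WithTop.coe_le_coe.2 (le_top : (2 : ℕ∞) ≤ ⊤))
  have hH : ContDiff ℝ 2 (fun ε => F θ ε - G ε) := (hFC2 θ).sub hG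
  have hH2 := fderiv_fderiv_eq_zero_of_orthant hH fun ε hε => by
    have hprod : ∏ i, ε i ≠ 0 := (Finset.prod_pos fun i _ => hε i).ne'
    rw [hFpos θ ε hε, integral_ellipse τs _ hε, integral_ellipse τs _ hε,
      mul_div_mul_left _ _ hprod, sub_self]
  have hline : ∀ t : ℝ, HasDerivAt (fun s : ℝ => (Pi.single i t + Pi.single j s : Fin q → ℝ))
      (Pi.single j 1) 0 := fun t => (hasDerivAt_pi_single j 0).const_add _
  -- `G` is even in `s`, so its contribution to the inner derivative vanishes for every `t`.
  have hinner : (fun t : ℝ => deriv (fun s : ℝ => F θ (Pi.single i t + Pi.single j s)) 0)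
      = fun t : ℝ => fderiv ℝ (fun ε => F θ ε - G ε) (Pi.single i t) (Pi.single j 1) := by
    funext t
    have hGe : deriv (fun s : ℝ => G (Pi.single i t + Pi.single j s)) 0 = 0 := by
      refine deriv_zero_of_even fun s => ?_
      have hj : (Pi.single i t + Pi.single j (-s) : Fin q → ℝ) j
          = -(Pi.single i t + Pi.single j s : Fin q → ℝ) j := by
        simp [hij.symm]
      have hne : ∀ k, k ≠ j → (Pi.single i t + Pi.single j (-s) : Fin q → ℝ) k
          = (Pi.single i t + Pi.single j s : Fin q → ℝ) k := fun k hk => by simp [hk]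
      simp only [hGdef, scaledMean_reflect τs _ j hj hne]
    have hFl : DifferentiableAt ℝ (fun s : ℝ => F θ (Pi.single i t + Pi.single j s)) 0 :=
      ((hFC2 θ).differentiable two_ne_zero _).comp (0 : ℝ) (hline t).differentiableAt
    have hGl : DifferentiableAt ℝ (fun s : ℝ => G (Pi.single i t + Pi.single j s)) 0 :=
      (hG.differentiable two_ne_zero _).comp (0 : ℝ) (hline t).differentiableAt
    have hsub := deriv_fun_sub hFl hGl
    rw [hGe, sub_zero] at hsub
    rw [← hsub]
    have hpt : (Pi.single i t + Pi.single j (0 : ℝ) : Fin q → ℝ) = Pi.single i t := by simp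
    have hd := (hH.differentiable two_ne_zero
      (Pi.single i t + Pi.single j (0 : ℝ))).hasFDerivAt.comp_hasDerivAt (0 : ℝ) (hline t)
    rw [hpt] at hd
    exact hd.deriv
  rw [hinner]
  have hC1 : ContDiff ℝ 1 (fderiv ℝ fun ε => F θ ε - G ε) := hH.fderiv_right (by norm_num)
  have hd := (hC1.differentiable one_ne_zero
    (Pi.single i (0 : ℝ))).hasFDerivAt.comp_hasDerivAt (0 : ℝ) (hasDerivAt_pi_single i 0)
  rw [Pi.single_zero, hH2] at hd
  have := hd.clm_apply (hasDerivAt_const (0 : ℝ) (Pi.single j (1 : ℝ) : Fin q → ℝ))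
  simpa using this.deriv
end

section
/- As ε → 0 within (0,∞)^q, the acceptance probability p_E(ε) = ∫_{D_ε(τ*)} f_T(τ) dτ over the ellipse satisfies p_E(ε) = (∏_{i=1}^q ε_i) [ f_T(τ*) |B₁(0)| + (|B₁(0)|/(2(q+2))) Σ_{i=1}^q ε_i² ∂²_{τ_i} f_T(τ*) + r(ε) ] where |B₁(0)| is the Lebesgue volume of the unit ball in ℝ^q and the remainder satisfies |r(ε)| ≤ C|ε|³ for some constant C and all sufficiently small ε. -/
/-!
The substitution `τ = τ* + ε u` (coordinatewise product) turns the ellipse into the Euclidean unit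
ball `B` and produces the Jacobian `∏ ε_i` (`integral_ellipse`), so the bracket in the expansion is
`∫_B f(τ* + ε u) du`. On `B` the sup norm of `ε u` is at most `|ε|`, and the second-order Taylor
expansion of `f` at `τ*` has error at most `K |ε u|³` (`taylor_two_bound`).

It remains to integrate the Taylor polynomial over `B`. The linear term is odd and vanishes. In the
quadratic term the mixed moments `∫_B u_i u_j` vanish by reflecting one coordinate
(`integral_mul_of_ne`). The diagonal moments are all equal by swapping coordinates, and their sum
is `∫_B |u|² = |B| q / (q + 2)` by integration in polar coordinates (`integral_radial`), so each
equals `|B| / (q + 2)` (`integral_sq`). Finally the diagonal entries of the second Fréchet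
derivative are the iterated partial derivatives (`deriv_deriv_update`).
-/

open MeasureTheory

namespace ABCEllipse

/-- Second-order Taylor expansion with a cubic error bound. The second derivative is Lipschitz near
`x` because `f` is `C³`; the mean value inequality, applied first to the derivative and then to the
function, gains one power of `‖v‖` each time. -/
theorem taylor_two_bound {E : Type*} [NormedAddCommGroup E] [NormedSpace ℝ E]
    {f : E → ℝ} (hf : ContDiff ℝ 3 f) (x : E) :
    ∃ K ≥ 0, ∃ δ > 0, ∀ v : E, ‖v‖ < δ →
      |f (x + v) - (f x + fderiv ℝ f x v + 1 / 2 * fderiv ℝ (fderiv ℝ f) x v v)|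
        ≤ K * ‖v‖ ^ 3 := by
  have hf1 : ContDiff ℝ 2 (fderiv ℝ f) := hf.fderiv_right (by norm_num)
  have hf2 : ContDiff ℝ 1 (fderiv ℝ (fderiv ℝ f)) := hf1.fderiv_right (by norm_num)
  have hd0 : Differentiable ℝ f := hf.differentiable (by norm_num)
  have hd1 : Differentiable ℝ (fderiv ℝ f) := hf1.differentiable (by norm_num)
  obtain ⟨K, s, hs, hK⟩ := hf2.contDiffAt.exists_lipschitzOnWith (x := x)
  obtain ⟨δ, hδ, hball⟩ := Metric.mem_nhds_iff.1 hs
  refine ⟨K, K.2, δ, hδ, fun v hv => ?_⟩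
  set Q := fderiv ℝ (fderiv ℝ f) x with hQ
  have hsub : Metric.closedBall x ‖v‖ ⊆ s :=
    (Metric.closedBall_subset_ball hv).trans hball
  have hxs : x ∈ Metric.closedBall x ‖v‖ := Metric.mem_closedBall_self (norm_nonneg v)
  have hvs : x + v ∈ Metric.closedBall x ‖v‖ := by simp
  have hsymm : ∀ v w, Q v w = Q w v :=
    second_derivative_symmetric (fun y => (hd0 y).hasFDerivAt) (hd1 x).hasFDerivAt
  have h1 : ∀ y ∈ Metric.closedBall x ‖v‖,
      ‖fderiv ℝ f y - fderiv ℝ f x - Q (y - x)‖ ≤ K * ‖v‖ * ‖v‖ := by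
    intro y hy
    have hyv : ‖y - x‖ ≤ ‖v‖ := by simpa [dist_eq_norm] using hy
    refine (Convex.norm_image_sub_le_of_norm_hasFDerivWithin_le'
      (fun z _ => (hd1 z).hasFDerivAt.hasFDerivWithinAt) (fun z hz => ?_)
      (convex_closedBall x ‖v‖) hxs hy).trans
      (mul_le_mul_of_nonneg_left hyv (by positivity))
    refine (hK.norm_sub_le (hsub hz) (hsub hxs)).trans ?_
    gcongr
    simpa [dist_eq_norm] using hz
  -- Symmetry of `Q` makes the derivative of `Q w w / 2` at `w = y - x` equal to `Q (y - x)`.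
  have h2 : ∀ y, HasFDerivAt
      (fun y => f y - (fderiv ℝ f x (y - x) + 1 / 2 * Q (y - x) (y - x)))
      (fderiv ℝ f y - fderiv ℝ f x - Q (y - x)) y := by
    intro y
    have hid : HasFDerivAt (fun y : E => y - x) (ContinuousLinearMap.id ℝ E) y :=
      (hasFDerivAt_id y).sub_const x
    have ha := (fderiv ℝ f x).hasFDerivAt.comp y hid
    have hb := (Q.hasFDerivAt.comp y hid).clm_apply hid
    have := (hd0 y).hasFDerivAt.sub (ha.add (hb.const_mul (1 / 2)))
    refine this.congr_fderiv ?_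
    ext w
    have hw : Q w y - Q w x = Q y w - Q x w := by simp [hsymm w]
    simp
    linarith
  have h3 := Convex.norm_image_sub_le_of_norm_hasFDerivWithin_le
      (fun y _ => (h2 y).hasFDerivWithinAt) h1 (convex_closedBall x ‖v‖) hxs hvs
  have e : f (x + v) - (f x + fderiv ℝ f x v + 1 / 2 * Q v v) =
      (f (x + v) - (fderiv ℝ f x (x + v - x) + 1 / 2 * Q (x + v - x) (x + v - x))) -
      (f x - (fderiv ℝ f x (x - x) + 1 / 2 * Q (x - x) (x - x))) := by
    simp; ring
  rw [e, ← Real.norm_eq_abs]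
  refine h3.trans (le_of_eq ?_)
  rw [add_sub_cancel_left]; ring

theorem deriv_deriv_update {q : ℕ} {f : (Fin q → ℝ) → ℝ} (hf : ContDiff ℝ 3 f)
    (x : Fin q → ℝ) (i : Fin q) :
    deriv (deriv (fun t => f (Function.update x i t))) (x i) =
      fderiv ℝ (fderiv ℝ f) x (Pi.single i 1) (Pi.single i 1) := by
  have hf1 : ContDiff ℝ 2 (fderiv ℝ f) := hf.fderiv_right (by norm_num)
  have hd0 : Differentiable ℝ f := hf.differentiable (by norm_num)
  have hd1 : Differentiable ℝ (fderiv ℝ f) := hf1.differentiable (by norm_num)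
  have h1 : deriv (fun t => f (Function.update x i t)) =
      fun t => fderiv ℝ f (Function.update x i t) (Pi.single i 1) := by
    funext t
    exact ((hd0 _).hasFDerivAt.comp_hasDerivAt t (hasDerivAt_update x i t)).deriv
  rw [h1]
  have h2 := (hd1 (Function.update x i (x i))).hasFDerivAt.comp_hasDerivAt (x i)
    (hasDerivAt_update x i (x i))
  rw [Function.update_eq_self] at h2
  simpa using (h2.clm_apply (hasDerivAt_const (x i) (Pi.single i (1 : ℝ)))).deriv

/-- The closed Euclidean unit ball, as a subset of `Fin q → ℝ` (whose own norm is the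
sup norm). -/
def B (q : ℕ) : Set (Fin q → ℝ) := {u | ∑ i, u i ^ 2 ≤ 1}

theorem abs_le_one_of_mem_B {q : ℕ} {u : Fin q → ℝ} (hu : u ∈ B q) (i : Fin q) : |u i| ≤ 1 := by
  rw [← sq_le_one_iff_abs_le_one]
  exact (Finset.single_le_sum (f := fun i => u i ^ 2) (fun j _ => sq_nonneg _)
    (Finset.mem_univ i)).trans hu

theorem isCompact_B (q : ℕ) : IsCompact (B q) := by
  refine Metric.isCompact_of_isClosed_isBounded
    (isClosed_le (by fun_prop) continuous_const) ?_
  refine (Metric.isBounded_closedBall (x := (0 : Fin q → ℝ)) (r := 1)).subset fun u hu => ?_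
  rw [mem_closedBall_zero_iff, pi_norm_le_iff_of_nonneg zero_le_one]
  exact abs_le_one_of_mem_B hu

theorem integrableOn_B {q : ℕ} {g : (Fin q → ℝ) → ℝ} (hg : Continuous g) :
    IntegrableOn g (B q) :=
  hg.continuousOn.integrableOn_compact (isCompact_B q)

/-- The integral of `|u|^(2k)` over the unit ball, by polar coordinates: `k = 0` gives the volume
of the ball, `k = 1` its second moment. -/
theorem integral_radial (q k : ℕ) (hq : 1 ≤ q) :
    ∫ u in B q, (∑ i, u i ^ 2) ^ k =
      volume.real (Metric.ball (0 : EuclideanSpace ℝ (Fin q)) 1) * (q / (q + 2 * k)) := by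
  have : Nonempty (Fin q) := ⟨⟨0, hq⟩⟩
  have h := integral_fun_norm_addHaar (volume : Measure (EuclideanSpace ℝ (Fin q)))
    ((Set.Iic (1 : ℝ)).indicator fun r => r ^ (2 * k))
  rw [← (PiLp.volume_preserving_toLp (Fin q)).integral_comp
    (MeasurableEquiv.toLp 2 _).measurableEmbedding] at h
  rw [← integral_indicator (isCompact_B q).measurableSet]
  have e : (fun x : Fin q → ℝ => (Set.Iic (1 : ℝ)).indicator (fun r => r ^ (2 * k))
      ‖WithLp.toLp 2 x‖) = (B q).indicator fun u => (∑ i, u i ^ 2) ^ k := by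
    funext x
    have hn : ‖WithLp.toLp 2 x‖ ^ 2 = ∑ i, x i ^ 2 := by
      simp [EuclideanSpace.norm_sq_eq]
    have hiff : ‖WithLp.toLp 2 x‖ ∈ Set.Iic (1 : ℝ) ↔ x ∈ B q := by
      rw [B, Set.mem_ofPred_eq, ← hn, sq_le_one_iff₀ (norm_nonneg _), Set.mem_Iic]
    by_cases hx : x ∈ B q
    · rw [Set.indicator_of_mem hx, Set.indicator_of_mem (hiff.2 hx), pow_mul, hn]
    · rw [Set.indicator_of_notMem hx, Set.indicator_of_notMem (mt hiff.1 hx)]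
  rw [e] at h
  rw [h]
  have e2 : ∫ y in Set.Ioi (0 : ℝ),
      y ^ (Module.finrank ℝ (EuclideanSpace ℝ (Fin q)) - 1) •
        (Set.Iic (1 : ℝ)).indicator (fun r => r ^ (2 * k)) y = 1 / (q + 2 * k) := by
    have : (fun y : ℝ => y ^ (Module.finrank ℝ (EuclideanSpace ℝ (Fin q)) - 1) •
        (Set.Iic (1 : ℝ)).indicator (fun r => r ^ (2 * k)) y) =
        (Set.Iic (1 : ℝ)).indicator fun y => y ^ (q - 1 + 2 * k) := by
      funext y
      by_cases hy : y ∈ Set.Iic (1 : ℝ)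
      · simp only [Set.indicator_of_mem hy, finrank_euclideanSpace_fin, smul_eq_mul, pow_add]
      · simp [Set.indicator_of_notMem hy]
    rw [this, setIntegral_indicator measurableSet_Iic, Set.Ioi_inter_Iic,
      ← intervalIntegral.integral_of_le zero_le_one, integral_pow]
    have h1 : ((q - 1 + 2 * k : ℕ) : ℝ) + 1 = q + 2 * k := by
      rw [← Nat.cast_add_one]
      rw [show q - 1 + 2 * k + 1 = q + 2 * k by omega]
      push_cast; ring
    rw [h1]
    simp
  rw [e2, finrank_euclideanSpace_fin]
  simp only [nsmul_eq_mul, smul_eq_mul]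
  ring

theorem volume_B (q : ℕ) (hq : 1 ≤ q) :
    volume.real (B q) = volume.real (Metric.ball (0 : EuclideanSpace ℝ (Fin q)) 1) := by
  have := integral_radial q 0 hq
  have hq' : (q : ℝ) ≠ 0 := by positivity
  simpa [hq'] using this

/-- Invariance of integrals over the ball under measure-preserving symmetries. -/
theorem integral_B_comp {q : ℕ} (e : (Fin q → ℝ) ≃ᵐ (Fin q → ℝ)) (he : MeasurePreserving e)
    (hB : ∀ u, ∑ i, e u i ^ 2 = ∑ i, u i ^ 2) (g : (Fin q → ℝ) → ℝ) :
    ∫ u in B q, g (e u) = ∫ u in B q, g u := by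
  have h := he.setIntegral_preimage_emb e.measurableEmbedding g (B q)
  have : e ⁻¹' (B q) = B q := by
    ext u; simp [B, hB]
  rwa [this] at h

theorem integral_odd (q : ℕ) (L : (Fin q → ℝ) → ℝ) (hL : ∀ u, L (-u) = - L u) :
    ∫ u in B q, L u = 0 := by
  have h := integral_B_comp (MeasurableEquiv.neg (Fin q → ℝ))
    (Measure.measurePreserving_neg volume) (by simp) L
  simp only [MeasurableEquiv.neg_apply, hL, integral_neg] at h
  linarith

/-- The integrand changes sign under the reflection of the `i`-th coordinate. -/
theorem integral_mul_of_ne {q : ℕ} {i j : Fin q} (hij : i ≠ j) :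
    ∫ u in B q, u i * u j = 0 := by
  let s : Fin q → (ℝ ≃ᵐ ℝ) := fun k => if k = i then MeasurableEquiv.neg ℝ else .refl ℝ
  have hs : ∀ k, MeasurePreserving (s k) := by
    intro k
    by_cases hk : k = i
    · simp only [s, hk, if_true]; exact Measure.measurePreserving_neg volume
    · simp only [s, hk, if_false]; exact MeasurePreserving.id _
  have h := integral_B_comp (MeasurableEquiv.piCongrRight s) (volume_preserving_pi hs)
    (fun u => Finset.sum_congr rfl fun k _ => by
      by_cases hk : k = i <;> simp [s, hk, MeasurableEquiv.piCongrRight])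
    (fun u => u i * u j)
  simp [MeasurableEquiv.piCongrRight, s, hij.symm, integral_neg] at h
  linarith

theorem integral_sq_eq {q : ℕ} (i j : Fin q) :
    ∫ u in B q, u i ^ 2 = ∫ u in B q, u j ^ 2 := by
  have h := integral_B_comp
    (MeasurableEquiv.piCongrLeft (fun _ : Fin q => ℝ) (Equiv.swap i j))
    (volume_measurePreserving_piCongrLeft _ _)
    (fun u => by
      rw [← Equiv.sum_comp (Equiv.swap i j)]
      simp [MeasurableEquiv.coe_piCongrLeft, Equiv.piCongrLeft_apply_apply])
    (fun u => u j ^ 2)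
  rw [← h]
  refine integral_congr_ae (.of_forall fun u => ?_)
  simp only
  congr 1
  have := Equiv.piCongrLeft_apply_apply (fun _ : Fin q => ℝ) (Equiv.swap i j) u i
  simpa [MeasurableEquiv.coe_piCongrLeft] using this.symm

theorem integral_sq {q : ℕ} (i : Fin q) :
    ∫ u in B q, u i ^ 2 = volume.real (B q) / (q + 2) := by
  have hq : 1 ≤ q := Nat.one_le_iff_ne_zero.2 (by rintro rfl; exact i.elim0)
  have h := integral_radial q 1 hq
  simp only [pow_one] at h
  rw [integral_finsetSum _ (fun j _ => integrableOn_B (by fun_prop)),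
    Finset.sum_congr rfl (fun j _ => integral_sq_eq j i), ← volume_B q hq] at h
  simp at h
  have hq' : (q : ℝ) ≠ 0 := by positivity
  field_simp at h ⊢
  linarith

theorem integral_quadratic {q : ℕ} (Q : (Fin q → ℝ) →L[ℝ] (Fin q → ℝ) →L[ℝ] ℝ) (ε : Fin q → ℝ) :
    ∫ u in B q, Q (ε * u) (ε * u) =
      volume.real (B q) / (q + 2) * ∑ i, ε i ^ 2 * Q (Pi.single i 1) (Pi.single i 1) := by
  have e : ∀ u : Fin q → ℝ, Q (ε * u) (ε * u) =
      ∑ i, ∑ j, (ε i * ε j * Q (Pi.single i 1) (Pi.single j 1)) * (u i * u j) := by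
    intro u
    have hu : ε * u = ∑ i, (ε i * u i) • (Pi.single i (1 : ℝ) : Fin q → ℝ) := by
      exact pi_eq_sum_univ' (ε * u)
    rw [hu]
    simp only [map_sum, map_smul, sum_apply, smul_apply,
      smul_eq_mul, Finset.mul_sum]
    rw [Finset.sum_comm]
    refine Finset.sum_congr rfl fun i _ => Finset.sum_congr rfl fun j _ => by ring
  simp_rw [e]
  rw [integral_finsetSum _ (fun i _ => integrableOn_B (by fun_prop)), Finset.mul_sum]
  refine Finset.sum_congr rfl fun i _ => ?_
  rw [integral_finsetSum _ (fun j _ => integrableOn_B (by fun_prop)),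
    Finset.sum_eq_single i]
  · rw [integral_const_mul]
    simp_rw [← pow_two]
    rw [integral_sq]; ring
  · intro j _ hj
    rw [integral_const_mul, integral_mul_of_ne hj.symm, mul_zero]
  · simp

/-- Change of variables `y = x + ε u`, mapping the unit ball onto the ellipse. -/
theorem integral_ellipse {q : ℕ} (f : (Fin q → ℝ) → ℝ) (x ε : Fin q → ℝ) (hε : ∀ i, 0 < ε i) :
    ∫ y in {y : Fin q → ℝ | ∑ i, ((y i - x i) / ε i) ^ 2 ≤ 1}, f y =
      (∏ i, ε i) * ∫ u in B q, f (x + ε * u) := by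
  have hP : 0 < ∏ i, ε i := Finset.prod_pos fun i _ => hε i
  have hm : MeasurableSet {y : Fin q → ℝ | ∑ i, ((y i - x i) / ε i) ^ 2 ≤ 1} :=
    (isClosed_le (by fun_prop) continuous_const).measurableSet
  rw [← integral_indicator hm, ← integral_indicator (isCompact_B q).measurableSet,
    ← integral_add_left_eq_self _ x]
  have hdet : (Matrix.diagonal ε).det = ∏ i, ε i := Matrix.det_diagonal
  have hinj : Function.Injective (Matrix.toLin' (Matrix.diagonal ε)) := by
    intro u v huv
    funext i
    have := congrFun huv i
    simpa [Matrix.mulVec_diagonal, (hε i).ne'] using this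
  have hemb : MeasurableEmbedding (Matrix.toLin' (Matrix.diagonal ε)) :=
    (LinearMap.continuous_on_pi _).measurableEmbedding hinj
  conv_lhs =>
    rw [← Real.smul_map_diagonal_volume_pi (D := ε) (by rw [hdet]; exact hP.ne'),
      integral_smul_measure, hemb.integral_map, hdet, abs_of_pos hP,
      ENNReal.toReal_ofReal hP.le, smul_eq_mul]
  congr 2
  funext u
  have hu : Matrix.toLin' (Matrix.diagonal ε) u = ε * u := by
    funext i; simp [Matrix.mulVec_diagonal]
  rw [hu]
  have hiff : x + ε * u ∈ {y : Fin q → ℝ | ∑ i, ((y i - x i) / ε i) ^ 2 ≤ 1} ↔ u ∈ B q := by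
    simp [B, (hε _).ne']
  by_cases h : u ∈ B q
  · rw [Set.indicator_of_mem h, Set.indicator_of_mem (hiff.2 h)]
  · rw [Set.indicator_of_notMem h, Set.indicator_of_notMem (mt hiff.1 h)]

theorem norm_mul_le {q : ℕ} {ε u : Fin q → ℝ} (hu : u ∈ B q) :
    ‖ε * u‖ ≤ Real.sqrt (∑ i, ε i ^ 2) := by
  rw [pi_norm_le_iff_of_nonneg (Real.sqrt_nonneg _)]
  intro i
  rw [Pi.mul_apply, norm_mul]
  refine (mul_le_of_le_one_right (norm_nonneg _) (abs_le_one_of_mem_B hu i)).trans ?_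
  exact Real.abs_le_sqrt (Finset.single_le_sum (f := fun i => ε i ^ 2)
    (fun j _ => sq_nonneg _) (Finset.mem_univ i))

end ABCEllipse

open ABCEllipse in
/-- As ε → 0 within (0,∞)^q, the ellipse acceptance probability satisfies
p_E(ε) = (∏ ε_i)[f_T(τ*)|B₁(0)| + (|B₁(0)|/(2(q+2))) Σ_i ε_i² ∂²_{τ_i} f_T(τ*) + r(ε)]
with |r(ε)| ≤ C|ε|³ for all sufficiently small ε. -/
theorem abc_ellipse_acceptance_probability_expansion
    (q : ℕ) (hq : 1 ≤ q)
    (τs : Fin q → ℝ)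
    (fT : (Fin q → ℝ) → ℝ)
    (hfT_smooth : ContDiff ℝ 3 fT)
    (hfT_pos : ∀ τ, 0 < fT τ)
    (hfT_int : Integrable fT)
    (hfT_prob : ∫ τ, fT τ = 1) :
    ∃ C > 0, ∃ δ > 0, ∀ ε : Fin q → ℝ, (∀ i, 0 < ε i) →
      Real.sqrt (∑ i, ε i ^ 2) < δ →
      |(∫ τ in {τ : Fin q → ℝ | ∑ i, ((τ i - τs i) / ε i) ^ 2 ≤ 1}, fT τ) -
          (∏ i, ε i) *
            (fT τs * (volume {τ : Fin q → ℝ | ∑ i, τ i ^ 2 ≤ 1}).toReal +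
              ((volume {τ : Fin q → ℝ | ∑ i, τ i ^ 2 ≤ 1}).toReal / (2 * ((q : ℝ) + 2))) *
                ∑ i, ε i ^ 2 * deriv (deriv (fun t => fT (Function.update τs i t))) (τs i))|
        ≤ (∏ i, ε i) * (C * Real.sqrt (∑ i, ε i ^ 2) ^ 3) := by
  -- `B q` unfolds to the set in the statement, and `volume.real` to `(volume _).toReal`.
  change ∃ C > 0, ∃ δ > 0, ∀ ε : Fin q → ℝ, (∀ i, 0 < ε i) →
    Real.sqrt (∑ i, ε i ^ 2) < δ →
    |(∫ τ in {τ : Fin q → ℝ | ∑ i, ((τ i - τs i) / ε i) ^ 2 ≤ 1}, fT τ) -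
        (∏ i, ε i) * (fT τs * volume.real (B q) + (volume.real (B q) / (2 * ((q : ℝ) + 2))) *
          ∑ i, ε i ^ 2 * deriv (deriv (fun t => fT (Function.update τs i t))) (τs i))|
      ≤ (∏ i, ε i) * (C * Real.sqrt (∑ i, ε i ^ 2) ^ 3)
  obtain ⟨K, hK, δ, hδ, hT⟩ := taylor_two_bound hfT_smooth τs
  -- The summand `1` only serves to make the constant strictly positive.
  refine ⟨K * volume.real (B q) + 1, by positivity, δ, hδ, fun ε hε hεδ => ?_⟩
  have hP : 0 < ∏ i, ε i := Finset.prod_pos fun i _ => hε i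
  set s := Real.sqrt (∑ i, ε i ^ 2) with hs
  have hs0 : 0 ≤ s := Real.sqrt_nonneg _
  set L := fderiv ℝ fT τs
  set Q := fderiv ℝ (fderiv ℝ fT) τs
  have hcf : Continuous fT := hfT_smooth.continuous
  have hpoly : ∫ u in B q, (fT τs + L (ε * u) + 1 / 2 * Q (ε * u) (ε * u)) =
      fT τs * volume.real (B q) + (volume.real (B q) / (2 * ((q : ℝ) + 2))) *
        ∑ i, ε i ^ 2 * deriv (deriv (fun t => fT (Function.update τs i t))) (τs i) := by
    rw [integral_add (integrableOn_B (by fun_prop)) (integrableOn_B (by fun_prop)),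
      integral_add (integrableOn_B (by fun_prop)) (integrableOn_B (by fun_prop)),
      integral_odd q (fun u => L (ε * u)) (by simp), integral_const_mul, integral_quadratic]
    simp_rw [deriv_deriv_update hfT_smooth]
    simp only [integral_const, smul_eq_mul, measureReal_restrict_apply_univ]
    field_simp
    ring
  rw [integral_ellipse fT τs ε hε, ← hpoly, ← mul_sub, abs_mul, abs_of_pos hP,
    ← integral_sub (integrableOn_B (by fun_prop)) (integrableOn_B (by fun_prop))]
  refine mul_le_mul_of_nonneg_left ?_ hP.le
  have hb := norm_setIntegral_le_of_norm_le_const (μ := volume) (s := B q) (C := K * s ^ 3)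
    (f := fun u => fT (τs + ε * u) - (fT τs + L (ε * u) + 1 / 2 * Q (ε * u) (ε * u)))
    (isCompact_B q).measure_lt_top (fun u hu => by
      have hn := norm_mul_le (ε := ε) hu
      refine (hT (ε * u) (hn.trans_lt hεδ)).trans ?_
      gcongr)
  rw [Real.norm_eq_abs] at hb
  refine hb.trans ?_
  nlinarith [pow_nonneg hs0 3]
end

section
/- Under the Normal-Gamma density with α_n > 1, for any n ≥ 1 the bias coefficients for the observable 1/λ, defined by C₁ = (n²/8) E[ (1/λ) ( μ²λ² − E[μ²λ²] ) ] and C₂ = (n²/8) E[ (1/λ) ( λ²/4 − E[λ²/4] ) ], satisfy C₁ = (n²/8) [ −2 μ_n² α_n/(β_n(α_n−1)) − 1/(κ_n(α_n−1)) ] and C₂ = −(n²/16) · α_n/(β_n(α_n−1)). -/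
open MeasureTheory

/-!
The Normal-Gamma density factors as a Gaussian density in `μ` with mean `μn` and variance
`1 / (κn l)`, times the Gamma density in `l`. By Tonelli, a nonnegative observable `h` can first be
averaged over `μ` with `l` fixed (`HasNGMean.of_conditional`), which turns every expectation needed
into a Gamma moment: `E[l⁻¹] = β/(α-1)`, `E[l] = α/β`, `E[l²] = α(α+1)/β²`,
`E[μ² l] = μn² α/β + 1/κ` and `E[μ² l²] = μn² α(α+1)/β² + α/(βκ)`.
The hypothesis `α > 1` is what makes `l⁻¹` integrable. All these observables are integrable for the
joint law, so the expectation is linear on them and the coefficients follow by algebra.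
-/

/-- The density at `μ` of the normal law with mean `m` and precision `κ * l`. -/
noncomputable def gaussKernel (m κ μ l : ℝ) : ℝ :=
  Real.sqrt (κ * l / (2 * Real.pi)) * Real.exp (-(κ * l * (μ - m) ^ 2) / 2)

/-- The density at `l` of the Gamma law with shape `α` and rate `β`; meaningful for `0 < l`. -/
noncomputable def gammaDens (α β l : ℝ) : ℝ :=
  (β ^ α / Real.Gamma α) * l ^ (α - 1) * Real.exp (-(β * l))

/-- The function `w` is integrable for the Gamma law, with mean `v`. -/
def HasGammaMean (α β : ℝ) (w : ℝ → ℝ) (v : ℝ) : Prop :=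
  IntegrableOn (fun l => w l * gammaDens α β l) (Set.Ioi 0) ∧
    ∫ l in Set.Ioi (0 : ℝ), w l * gammaDens α β l = v

/-- The observable `h` is integrable on the half plane for the Normal-Gamma law, with mean `v`. -/
def HasNGMean (m κ α β : ℝ) (h : ℝ → ℝ → ℝ) (v : ℝ) : Prop :=
  Integrable (fun z : ℝ × ℝ => h z.1 z.2 * (gaussKernel m κ z.1 z.2 * gammaDens α β z.2))
      (volume.prod (volume.restrict (Set.Ioi 0))) ∧
    ∫ z : ℝ × ℝ, h z.1 z.2 * (gaussKernel m κ z.1 z.2 * gammaDens α β z.2)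
      ∂(volume.prod (volume.restrict (Set.Ioi 0))) = v

lemma gaussKernel_eq_gaussianPDFReal (m κ μ l : ℝ) (hκ : 0 < κ) (hl : 0 < l) :
    gaussKernel m κ μ l =
      ProbabilityTheory.gaussianPDFReal m (Real.toNNReal (1 / (κ * l))) μ := by
  have hkl : 0 < κ * l := mul_pos hκ hl
  rw [ProbabilityTheory.gaussianPDFReal_def, gaussKernel]
  simp only [Real.coe_toNNReal _ (one_div_pos.mpr hkl).le]
  rw [← Real.sqrt_inv]
  congr 2
  · field_simp
  · field_simp

lemma gaussKernel_mass (m κ l : ℝ) (hκ : 0 < κ) (hl : 0 < l) :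
    Integrable (fun μ => gaussKernel m κ μ l) ∧ ∫ μ, gaussKernel m κ μ l = 1 := by
  have hv : Real.toNNReal (1 / (κ * l)) ≠ 0 := by
    exact (Real.toNNReal_pos.mpr (one_div_pos.mpr (mul_pos hκ hl))).ne'
  simp only [gaussKernel_eq_gaussianPDFReal m κ _ l hκ hl]
  exact ⟨ProbabilityTheory.integrable_gaussianPDFReal _ _,
    ProbabilityTheory.integral_gaussianPDFReal_eq_one _ hv⟩

lemma gaussKernel_second_moment (m κ l : ℝ) (hκ : 0 < κ) (hl : 0 < l) :
    Integrable (fun μ => μ ^ 2 * gaussKernel m κ μ l) ∧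
      ∫ μ, μ ^ 2 * gaussKernel m κ μ l = m ^ 2 + 1 / (κ * l) := by
  have hkl : 0 < κ * l := mul_pos hκ hl
  have hv : Real.toNNReal (1 / (κ * l)) ≠ 0 := by
    exact (Real.toNNReal_pos.mpr (one_div_pos.mpr hkl)).ne'
  have hv' : ((Real.toNNReal (1 / (κ * l)) : NNReal) : ℝ) = 1 / (κ * l) :=
    Real.coe_toNNReal _ (one_div_pos.mpr hkl).le
  simp only [gaussKernel_eq_gaussianPDFReal m κ _ l hκ hl]
  generalize Real.toNNReal (1 / (κ * l)) = v at hv hv'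
  have hL : MemLp (fun x : ℝ => x) 2 (ProbabilityTheory.gaussianReal m v) :=
    ProbabilityTheory.memLp_id_gaussianReal 2
  constructor
  · have h := hL.integrable_sq
    rw [ProbabilityTheory.gaussianReal_of_var_ne_zero _ hv, integrable_withDensity_iff
      (ProbabilityTheory.measurable_gaussianPDF _ _)
      (ae_of_all _ fun _ => ProbabilityTheory.gaussianPDF_lt_top)] at h
    simpa only [ProbabilityTheory.toReal_gaussianPDF] using h
  · have h := ProbabilityTheory.variance_eq_sub hL
    rw [ProbabilityTheory.variance_fun_id_gaussianReal,
      ProbabilityTheory.integral_id_gaussianReal] at h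
    have h2 : ∫ x, x ^ 2 ∂(ProbabilityTheory.gaussianReal m v)
        = ∫ x, x ^ 2 * ProbabilityTheory.gaussianPDFReal m v x := by
      rw [ProbabilityTheory.integral_gaussianReal_eq_integral_smul hv]
      simp only [smul_eq_mul, mul_comm]
    simp only [Pi.pow_apply] at h
    rw [← h2, ← hv']
    linarith

lemma gammaDens_nonneg {α β l : ℝ} (hα : 0 < α) (hβ : 0 < β) (hl : 0 < l) :
    0 ≤ gammaDens α β l := by
  have := Real.Gamma_pos_of_pos hα
  unfold gammaDens
  positivity

lemma HasGammaMean.rpow {α β s : ℝ} (hβ : 0 < β) (hs : 0 < α + s) :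
    HasGammaMean α β (fun l => l ^ s) (β ^ (-s) * (Real.Gamma (α + s) / Real.Gamma α)) := by
  have hcongr : ∀ l ∈ Set.Ioi (0 : ℝ), (β ^ α / Real.Gamma α) *
      (l ^ (α + s - 1) * Real.exp (-(β * l))) = l ^ s * gammaDens α β l := by
    intro l hl
    have : l ^ (α + s - 1) = l ^ s * l ^ (α - 1) := by
      rw [← Real.rpow_add hl]
      ring_nf
    rw [this, gammaDens]
    ring
  constructor
  · have h := integrableOn_rpow_mul_exp_neg_mul_rpow (p := 1) (s := α + s - 1) (b := β)
      (by linarith) one_pos hβ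
    refine IntegrableOn.congr_fun (h.const_mul (β ^ α / Real.Gamma α)) ?_ measurableSet_Ioi
    intro l hl
    simp only [← hcongr l hl, Real.rpow_one, neg_mul]
  · rw [← setIntegral_congr_fun measurableSet_Ioi hcongr, integral_const_mul,
      Real.integral_rpow_mul_exp_neg_mul_Ioi hs hβ, one_div, Real.inv_rpow hβ.le,
      ← Real.rpow_neg hβ.le, show -s = α + -(α + s) by ring, Real.rpow_add hβ α]
    ring

lemma HasGammaMean.congr {α β v v' : ℝ} {w w' : ℝ → ℝ} (h : HasGammaMean α β w v)
    (hw : ∀ l, 0 < l → w l = w' l) (hv : v = v') : HasGammaMean α β w' v' := by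
  have hc : ∀ l ∈ Set.Ioi (0 : ℝ), w l * gammaDens α β l = w' l * gammaDens α β l := by
    intro l hl
    rw [hw l hl]
  exact ⟨IntegrableOn.congr_fun h.1 hc measurableSet_Ioi,
    by rw [← setIntegral_congr_fun measurableSet_Ioi hc, h.2, hv]⟩

lemma HasGammaMean.add_mul {α β v₁ v₂ : ℝ} {w₁ w₂ : ℝ → ℝ} (h₁ : HasGammaMean α β w₁ v₁)
    (h₂ : HasGammaMean α β w₂ v₂) (a b : ℝ) :
    HasGammaMean α β (fun l => a * w₁ l + b * w₂ l) (a * v₁ + b * v₂) := by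
  have e : (fun l => (a * w₁ l + b * w₂ l) * gammaDens α β l) =
      fun l => a * (w₁ l * gammaDens α β l) + b * (w₂ l * gammaDens α β l) := by
    funext l
    ring
  unfold HasGammaMean
  rw [e]
  refine ⟨(h₁.1.const_mul a).add (h₂.1.const_mul b), ?_⟩
  rw [integral_add (h₁.1.const_mul a) (h₂.1.const_mul b), integral_const_mul, integral_const_mul,
    h₁.2, h₂.2]

lemma HasGammaMean.inv {α β : ℝ} (hα : 1 < α) (hβ : 0 < β) :
    HasGammaMean α β (fun l => l⁻¹) (β / (α - 1)) := by
  refine (HasGammaMean.rpow (s := -1) hβ (by linarith)).congr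
    (fun l _ => Real.rpow_neg_one l) ?_
  have h := Real.Gamma_add_one (s := α - 1) (by linarith)
  have hG := Real.Gamma_pos_of_pos (s := α - 1) (by linarith)
  have h1 : α - 1 ≠ 0 := by linarith
  rw [sub_add_cancel] at h
  rw [neg_neg, Real.rpow_one, h, ← sub_eq_add_neg]
  field_simp

lemma HasGammaMean.one {α β : ℝ} (hα : 0 < α) (hβ : 0 < β) :
    HasGammaMean α β (fun _ => 1) 1 := by
  refine (HasGammaMean.rpow (s := 0) hβ (by linarith)).congr (fun l _ => Real.rpow_zero l) ?_
  have hG := Real.Gamma_pos_of_pos hα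
  simp [hG.ne']

lemma HasGammaMean.id {α β : ℝ} (hα : 0 < α) (hβ : 0 < β) :
    HasGammaMean α β (fun l => l) (α / β) := by
  refine (HasGammaMean.rpow (s := 1) hβ (by linarith)).congr (fun l _ => Real.rpow_one l) ?_
  have hG := Real.Gamma_pos_of_pos hα
  rw [Real.Gamma_add_one hα.ne', Real.rpow_neg_one]
  field_simp

lemma HasGammaMean.sq {α β : ℝ} (hα : 0 < α) (hβ : 0 < β) :
    HasGammaMean α β (fun l => l ^ 2) (α * (α + 1) / β ^ 2) := by
  refine (HasGammaMean.rpow (s := 2) hβ (by linarith)).congr (fun l _ => Real.rpow_two l) ?_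
  have hG := Real.Gamma_pos_of_pos hα
  rw [show α + 2 = (α + 1) + 1 by ring, Real.Gamma_add_one (by linarith),
    Real.Gamma_add_one hα.ne', Real.rpow_neg hβ.le, Real.rpow_two]
  field_simp

/-- Averaging over `μ` first: a nonnegative observable whose conditional mean given `l` is `q l`
has the Gamma mean of `q` as its Normal-Gamma mean. -/
lemma HasNGMean.of_conditional {m κ α β v : ℝ} {h : ℝ → ℝ → ℝ} {q : ℝ → ℝ}
    (hα : 0 < α) (hβ : 0 < β)
    (hmeas : Measurable (fun z : ℝ × ℝ => h z.1 z.2))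
    (hnonneg : ∀ μ l, 0 < l → 0 ≤ h μ l)
    (hcond : ∀ l, 0 < l → Integrable (fun μ => h μ l * gaussKernel m κ μ l) ∧
      ∫ μ, h μ l * gaussKernel m κ μ l = q l)
    (hq : HasGammaMean α β q v) : HasNGMean m κ α β h v := by
  have hinner : ∀ l ∈ Set.Ioi (0 : ℝ),
      ∫ μ, h μ l * (gaussKernel m κ μ l * gammaDens α β l) = q l * gammaDens α β l := by
    intro l hl
    simp only [← mul_assoc]
    rw [integral_mul_const, (hcond l hl).2]
  have hint : Integrable
      (fun z : ℝ × ℝ => h z.1 z.2 * (gaussKernel m κ z.1 z.2 * gammaDens α β z.2))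
      (volume.prod (volume.restrict (Set.Ioi 0))) := by
    rw [integrable_prod_iff']
    · constructor
      · filter_upwards [ae_restrict_mem measurableSet_Ioi] with l hl
        simp only [← mul_assoc]
        exact (hcond l hl).1.mul_const _
      · refine IntegrableOn.congr_fun hq.1 ?_ measurableSet_Ioi
        intro l hl
        dsimp only
        rw [← hinner l hl]
        refine integral_congr_ae (ae_of_all _ fun μ => ?_)
        refine (Real.norm_of_nonneg ?_).symm
        have hg : 0 ≤ gaussKernel m κ μ l := by
          unfold gaussKernel
          positivity
        exact mul_nonneg (hnonneg μ l hl) (mul_nonneg hg (gammaDens_nonneg hα hβ hl))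
    · refine (hmeas.mul (Measurable.mul ?_ ?_)).aestronglyMeasurable
      · unfold gaussKernel
        fun_prop
      · unfold gammaDens
        fun_prop
  refine ⟨hint, ?_⟩
  rw [integral_prod_symm _ hint, setIntegral_congr_fun measurableSet_Ioi hinner, hq.2]

lemma HasNGMean.of_precision {m κ α β v : ℝ} {w : ℝ → ℝ} (hκ : 0 < κ) (hα : 0 < α)
    (hβ : 0 < β) (hmeas : Measurable w) (hnonneg : ∀ l, 0 < l → 0 ≤ w l)
    (hw : HasGammaMean α β w v) : HasNGMean m κ α β (fun _ l => w l) v := by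
  refine HasNGMean.of_conditional hα hβ (hmeas.comp measurable_snd) (fun _ l hl => hnonneg l hl)
    (fun l hl => ?_) hw
  obtain ⟨h1, h2⟩ := gaussKernel_mass m κ l hκ hl
  exact ⟨h1.const_mul _, by rw [integral_const_mul, h2, mul_one]⟩

lemma HasNGMean.sq_mul {m κ α β v : ℝ} {w : ℝ → ℝ} (hκ : 0 < κ) (hα : 0 < α)
    (hβ : 0 < β) (hmeas : Measurable w) (hnonneg : ∀ l, 0 < l → 0 ≤ w l)
    (hw : HasGammaMean α β (fun l => w l * (m ^ 2 + 1 / (κ * l))) v) :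
    HasNGMean m κ α β (fun μ l => μ ^ 2 * w l) v := by
  refine HasNGMean.of_conditional hα hβ
    ((measurable_fst.pow_const 2).mul (hmeas.comp measurable_snd))
    (fun μ l hl => mul_nonneg (sq_nonneg μ) (hnonneg l hl)) (fun l hl => ?_) hw
  obtain ⟨h1, h2⟩ := gaussKernel_second_moment m κ l hκ hl
  have e : ∀ μ : ℝ, μ ^ 2 * w l * gaussKernel m κ μ l
      = w l * (μ ^ 2 * gaussKernel m κ μ l) := fun μ => by ring
  simp only [e]
  exact ⟨h1.const_mul _, by rw [integral_const_mul, h2]⟩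

lemma HasNGMean.add_mul {m κ α β v₁ v₂ : ℝ} {h₁ h₂ : ℝ → ℝ → ℝ}
    (H₁ : HasNGMean m κ α β h₁ v₁) (H₂ : HasNGMean m κ α β h₂ v₂) (a b : ℝ) :
    HasNGMean m κ α β (fun μ l => a * h₁ μ l + b * h₂ μ l) (a * v₁ + b * v₂) := by
  have e : (fun z : ℝ × ℝ => (a * h₁ z.1 z.2 + b * h₂ z.1 z.2) *
      (gaussKernel m κ z.1 z.2 * gammaDens α β z.2)) =
      fun z => a * (h₁ z.1 z.2 * (gaussKernel m κ z.1 z.2 * gammaDens α β z.2)) +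
        b * (h₂ z.1 z.2 * (gaussKernel m κ z.1 z.2 * gammaDens α β z.2)) := by
    funext z
    ring
  unfold HasNGMean
  rw [e]
  refine ⟨(H₁.1.const_mul a).add (H₂.1.const_mul b), ?_⟩
  rw [integral_add (H₁.1.const_mul a) (H₂.1.const_mul b), integral_const_mul, integral_const_mul,
    H₁.2, H₂.2]

/-- Under the Normal-Gamma density with α_n > 1, for any n ≥ 1 the bias
coefficients for the observable 1/λ satisfy
C₁ = (n²/8) E[(1/λ)(μ²λ² − E[μ²λ²])] = (n²/8)[−2μ_n² α_n/(β_n(α_n−1)) − 1/(κ_n(α_n−1))]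
and C₂ = (n²/8) E[(1/λ)(λ²/4 − E[λ²/4])] = −(n²/16) α_n/(β_n(α_n−1)). -/
theorem normal_gamma_bias_coefficients_variance
    (μn κn αn βn : ℝ) (hκ : 0 < κn) (hα : 1 < αn) (hβ : 0 < βn)
    (n : ℕ) (hn : 1 ≤ n)
    (f : ℝ → ℝ → ℝ)
    (hf : ∀ μ l : ℝ, 0 < l → f μ l =
      Real.sqrt (κn * l / (2 * Real.pi)) * Real.exp (-(κn * l * (μ - μn) ^ 2) / 2) *
        (βn ^ αn / Real.Gamma αn) * l ^ (αn - 1) * Real.exp (-(βn * l)))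
    (E : (ℝ → ℝ → ℝ) → ℝ)
    (hE : ∀ h : ℝ → ℝ → ℝ, E h = ∫ μ : ℝ, ∫ l in Set.Ioi (0 : ℝ), h μ l * f μ l) :
    ((n : ℝ) ^ 2 / 8) *
        E (fun μ l => (1 / l) * (μ ^ 2 * l ^ 2 - E (fun μ' l' => μ' ^ 2 * l' ^ 2)))
      = ((n : ℝ) ^ 2 / 8) *
          (-2 * μn ^ 2 * αn / (βn * (αn - 1)) - 1 / (κn * (αn - 1)))
    ∧ ((n : ℝ) ^ 2 / 8) *
        E (fun μ l => (1 / l) * (l ^ 2 / 4 - E (fun μ' l' => l' ^ 2 / 4)))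
      = -((n : ℝ) ^ 2 / 16) * (αn / (βn * (αn - 1))) := by
  have hα0 : 0 < αn := by linarith
  have hα1 : αn - 1 ≠ 0 := by linarith
  -- `E` is an iterated integral; Fubini identifies it with the mean for the joint law.
  have key : ∀ (h h' : ℝ → ℝ → ℝ) (v : ℝ), HasNGMean μn κn αn βn h' v →
      (∀ μ l, 0 < l → h μ l = h' μ l) → E h = v := by
    intro h h' v H hh
    rw [hE, ← H.2, integral_prod _ H.1]
    refine integral_congr_ae (ae_of_all _ fun μ => ?_)
    refine setIntegral_congr_fun measurableSet_Ioi fun l hl => ?_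
    dsimp only
    rw [hh μ l hl, hf μ l hl, gaussKernel, gammaDens]
    ring
  have hid := HasGammaMean.id hα0 hβ
  have hsq := HasGammaMean.sq hα0 hβ
  have Hinv : HasNGMean μn κn αn βn (fun _ l => l⁻¹) (βn / (αn - 1)) :=
    HasNGMean.of_precision hκ hα0 hβ measurable_inv (fun l hl => (inv_pos.mpr hl).le)
      (HasGammaMean.inv hα hβ)
  have Hid : HasNGMean μn κn αn βn (fun _ l => l) (αn / βn) :=
    HasNGMean.of_precision hκ hα0 hβ measurable_id (fun l hl => hl.le) hid
  have Hsq : HasNGMean μn κn αn βn (fun _ l => l ^ 2) (αn * (αn + 1) / βn ^ 2) :=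
    HasNGMean.of_precision hκ hα0 hβ (by fun_prop) (fun l _ => sq_nonneg l) hsq
  have Hμid : HasNGMean μn κn αn βn (fun μ l => μ ^ 2 * l)
      (μn ^ 2 * (αn / βn) + 1 / κn * 1) :=
    HasNGMean.sq_mul hκ hα0 hβ measurable_id (fun l hl => hl.le)
      ((hid.add_mul (HasGammaMean.one hα0 hβ) (μn ^ 2) (1 / κn)).congr
        (fun l hl => by field_simp) rfl)
  have Hμsq : HasNGMean μn κn αn βn (fun μ l => μ ^ 2 * l ^ 2)
      (μn ^ 2 * (αn * (αn + 1) / βn ^ 2) + 1 / κn * (αn / βn)) :=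
    HasNGMean.sq_mul hκ hα0 hβ (by fun_prop) (fun l _ => sq_nonneg l)
      ((hsq.add_mul hid (μn ^ 2) (1 / κn)).congr (fun l hl => by field_simp) rfl)
  have E1 := key (fun μ l => μ ^ 2 * l ^ 2) _ _ Hμsq fun _ _ _ => rfl
  have E2 := key (fun _ l => l ^ 2 / 4) _ _ (Hsq.add_mul Hsq (1 / 4) 0)
    fun μ l _ => by ring
  rw [E1, E2]
  constructor
  · rw [key _ _ _ (Hμid.add_mul Hinv 1
      (-(μn ^ 2 * (αn * (αn + 1) / βn ^ 2) + 1 / κn * (αn / βn))))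
      fun μ l hl => by field_simp; ring]
    field_simp
    ring
  · rw [key _ _ _ (Hid.add_mul Hinv (1 / 4)
      (-(1 / 4 * (αn * (αn + 1) / βn ^ 2) + 0 * (αn * (αn + 1) / βn ^ 2))))
      fun μ l hl => by field_simp; ring]
    field_simp
    ring
end

section
/- Let g : ℝ^m → ℝ be smooth with a unique global maximizer θ* that is an interior nondegenerate critical point (∇g(θ*) = 0 and the Hessian ∇²g(θ*) is negative definite), and suppose that for every δ > 0 there is η > 0 with g(θ) ≤ g(θ*) − η whenever |θ − θ*| ≥ δ. Let φ : ℝ^m → (0,∞) be continuous and h : ℝ^m → ℝ be continuous, and assume ∫_{ℝ^m} (1 + |h(θ)|) φ(θ) e^{n g(θ)} dθ < ∞ for all n ≥ 1. Then the posterior expectations converge to the value at the maximizer: lim_{n→∞} ( ∫_{ℝ^m} h(θ) φ(θ) e^{n g(θ)} dθ ) / ( ∫_{ℝ^m} φ(θ) e^{n g(θ)} dθ ) = h(θ*). -/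
/-!
Write `N n = ∫ h φ e^{n g}` and `D n = ∫ φ e^{n g}`. Given `ε > 0`, choose `δ` with
`|h - h θs| ≤ ε` on the `δ`-ball around `θs`, and let `c > 0` be the gap of `g` outside that ball.
With `n = k + 1` there is the pointwise bound
`|h - h θs| φ e^{n g} ≤ ε φ e^{n g} + e^{k (g θs - c)} |h - h θs| φ e^g`,
because the first term dominates inside the ball and the second outside. Restricting `D n` to the
open set `{g > g θs - c / 2}` gives `D n ≥ e^{k (g θs - c / 2)} K` with `K > 0`. Hence
`|N n / D n - h θs| ≤ ε + e^{-k c / 2} I / K`, where `I = ∫ |h - h θs| φ e^g`, and the last term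
tends to `0`.
-/

open MeasureTheory

/-- Exponential lower bound for the normalizing integral: for any level `a` below the value of `g`
at some point, `∫ φ e^{(k+1) g}` is at least a positive multiple of `e^{k a}`. -/
lemma exists_exp_mul_le_integral {m : ℕ} {g φ : (Fin m → ℝ) → ℝ} (hg : Continuous g)
    (hφpos : ∀ θ, 0 < φ θ)
    (hint : ∀ k : ℕ, Integrable (fun θ => φ θ * Real.exp ((k + 1 : ℕ) * g θ)))
    {a : ℝ} {θs : Fin m → ℝ} (ha : a < g θs) :
    ∃ K > 0, ∀ k : ℕ, Real.exp (k * a) * K ≤ ∫ θ, φ θ * Real.exp ((k + 1 : ℕ) * g θ) := by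
  set V : Set (Fin m → ℝ) := {θ | a < g θ} with hV
  have hVo : IsOpen V := isOpen_lt continuous_const hg
  have hI : Integrable (fun θ => φ θ * Real.exp (g θ)) := by simpa using hint 0
  refine ⟨∫ θ in V, φ θ * Real.exp (g θ), ?_, fun k => ?_⟩
  · have hpos : ∀ θ, 0 < φ θ * Real.exp (g θ) := fun θ => mul_pos (hφpos θ) (Real.exp_pos _)
    rw [gt_iff_lt, setIntegral_pos_iff_support_of_nonneg_ae
      (Filter.Eventually.of_forall fun θ => (hpos θ).le) hI.integrableOn]
    have hs : Function.support (fun θ => φ θ * Real.exp (g θ)) = Set.univ :=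
      Set.eq_univ_of_forall fun θ => (hpos θ).ne'
    rw [hs, Set.univ_inter]
    exact hVo.measure_pos volume ⟨θs, ha⟩
  · rw [← integral_const_mul]
    calc ∫ θ in V, Real.exp (k * a) * (φ θ * Real.exp (g θ))
        ≤ ∫ θ in V, φ θ * Real.exp ((k + 1 : ℕ) * g θ) := by
          refine setIntegral_mono_on (hI.integrableOn.const_mul _) (hint k).integrableOn
            hVo.measurableSet fun θ hθ => ?_
          have hle : Real.exp (k * a) ≤ Real.exp (k * g θ) :=
            Real.exp_le_exp.2 (mul_le_mul_of_nonneg_left (le_of_lt hθ) (Nat.cast_nonneg k))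
          have hsplit : Real.exp ((k + 1 : ℕ) * g θ) = Real.exp (k * g θ) * Real.exp (g θ) := by
            rw [← Real.exp_add]; push_cast; ring_nf
          rw [hsplit]
          have := mul_le_mul_of_nonneg_right hle (mul_pos (hφpos θ) (Real.exp_pos (g θ))).le
          linarith
      _ ≤ ∫ θ, φ θ * Real.exp ((k + 1 : ℕ) * g θ) :=
          setIntegral_le_integral (hint k) (Filter.Eventually.of_forall fun θ =>
            (mul_pos (hφpos θ) (Real.exp_pos _)).le)

/-- Laplace asymptotics: if g is smooth with unique global maximizer θ*,
an interior nondegenerate critical point (∇g(θ*) = 0, Hessian negative definite), with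
separation from the maximum away from θ*, φ continuous positive, h continuous, and the
relevant integrals finite, then
(∫ h φ e^{ng}) / (∫ φ e^{ng}) → h(θ*) as n → ∞. -/
theorem laplace_posterior_expectation_limit
    (m : ℕ) (hm : 1 ≤ m)
    (g : (Fin m → ℝ) → ℝ) (hg : ContDiff ℝ (⊤ : ℕ∞) g)
    (θs : Fin m → ℝ)
    (hmax : ∀ θ : Fin m → ℝ, θ ≠ θs → g θ < g θs)
    (hcrit : fderiv ℝ g θs = 0)
    (hhess : ∀ v : Fin m → ℝ, v ≠ 0 → iteratedFDeriv ℝ 2 g θs ![v, v] < 0)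
    (hsep : ∀ δ : ℝ, 0 < δ → ∃ c > 0, ∀ θ : Fin m → ℝ, δ ≤ ‖θ - θs‖ → g θ ≤ g θs - c)
    (φ : (Fin m → ℝ) → ℝ) (hφcont : Continuous φ) (hφpos : ∀ θ, 0 < φ θ)
    (h : (Fin m → ℝ) → ℝ) (hhcont : Continuous h)
    (hint : ∀ n : ℕ, 1 ≤ n →
      Integrable (fun θ => (1 + |h θ|) * φ θ * Real.exp (n * g θ))) :
    Filter.Tendsto (fun n : ℕ =>
        (∫ θ, h θ * φ θ * Real.exp (n * g θ)) / (∫ θ, φ θ * Real.exp (n * g θ)))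
      Filter.atTop (nhds (h θs)) := by
  have hgc : Continuous g := hg.continuous
  have hDint : ∀ k : ℕ, Integrable (fun θ => φ θ * Real.exp ((k + 1 : ℕ) * g θ)) := fun k => by
    refine (hint (k + 1) (by omega)).mono' (by fun_prop) (Filter.Eventually.of_forall fun θ => ?_)
    have hp := mul_pos (hφpos θ) (Real.exp_pos ((k + 1 : ℕ) * g θ))
    rw [Real.norm_eq_abs, abs_of_pos hp]
    nlinarith [abs_nonneg (h θ)]
  have hNint : ∀ k : ℕ, Integrable (fun θ => h θ * φ θ * Real.exp ((k + 1 : ℕ) * g θ)) :=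
    fun k => by
    refine (hint (k + 1) (by omega)).mono' (by fun_prop) (Filter.Eventually.of_forall fun θ => ?_)
    have hp := mul_pos (hφpos θ) (Real.exp_pos ((k + 1 : ℕ) * g θ))
    rw [Real.norm_eq_abs, mul_assoc, abs_mul, abs_of_pos hp]
    nlinarith [abs_nonneg (h θ)]
  have hdiff : ∀ k : ℕ,
      Integrable (fun θ => (h θ - h θs) * (φ θ * Real.exp ((k + 1 : ℕ) * g θ))) := fun k => by
    refine ((hNint k).sub ((hDint k).const_mul (h θs))).congr
      (Filter.Eventually.of_forall fun θ => ?_)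
    simp only [Pi.sub_apply]
    ring
  have hF : Integrable (fun θ => |h θ - h θs| * (φ θ * Real.exp (g θ))) := by
    refine (hdiff 0).abs.congr (Filter.Eventually.of_forall fun θ => ?_)
    simp [abs_mul, abs_of_pos (hφpos θ)]
  rw [← Filter.tendsto_add_atTop_iff_nat 1, Metric.tendsto_atTop]
  intro ε hε
  obtain ⟨δ, hδ, hball⟩ := Metric.continuousAt_iff.1 hhcont.continuousAt (ε / 2) (half_pos hε)
  obtain ⟨c, hc, hgap⟩ := hsep δ hδ
  obtain ⟨K, hK, hlow⟩ := exists_exp_mul_le_integral hgc hφpos hDint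
    (a := g θs - c / 2) (θs := θs) (by linarith)
  set I : ℝ := ∫ θ, |h θ - h θs| * (φ θ * Real.exp (g θ)) with hIdef
  have hI0 : 0 ≤ I := integral_nonneg fun θ =>
    mul_nonneg (abs_nonneg _) (mul_pos (hφpos θ) (Real.exp_pos _)).le
  have hupper : ∀ k : ℕ,
      |(∫ θ, h θ * φ θ * Real.exp ((k + 1 : ℕ) * g θ)) -
        h θs * ∫ θ, φ θ * Real.exp ((k + 1 : ℕ) * g θ)| ≤
      ε / 2 * (∫ θ, φ θ * Real.exp ((k + 1 : ℕ) * g θ)) + Real.exp (k * (g θs - c)) * I := by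
    intro k
    rw [← integral_const_mul, ← integral_const_mul, ← integral_const_mul,
      ← integral_sub (hNint k) ((hDint k).const_mul _),
      ← integral_add ((hDint k).const_mul _) (hF.const_mul _), ← Real.norm_eq_abs]
    refine norm_integral_le_of_norm_le (((hDint k).const_mul _).add (hF.const_mul _))
      (Filter.Eventually.of_forall fun θ => ?_)
    have hp := mul_pos (hφpos θ) (Real.exp_pos ((k + 1 : ℕ) * g θ))
    have hp1 := mul_pos (hφpos θ) (Real.exp_pos (g θ))
    have heq : h θ * φ θ * Real.exp ((k + 1 : ℕ) * g θ) -
        h θs * (φ θ * Real.exp ((k + 1 : ℕ) * g θ)) =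
        (h θ - h θs) * (φ θ * Real.exp ((k + 1 : ℕ) * g θ)) := by ring
    rw [heq, Real.norm_eq_abs, abs_mul, abs_of_pos hp]
    have hp2 := mul_nonneg (abs_nonneg (h θ - h θs)) hp1.le
    by_cases hθ : δ ≤ ‖θ - θs‖
    · have hle : Real.exp (k * g θ) ≤ Real.exp (k * (g θs - c)) :=
        Real.exp_le_exp.2 (mul_le_mul_of_nonneg_left (hgap θ hθ) (Nat.cast_nonneg k))
      have hsplit : Real.exp ((k + 1 : ℕ) * g θ) = Real.exp (k * g θ) * Real.exp (g θ) := by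
        rw [← Real.exp_add]; push_cast; ring_nf
      have h1 := mul_le_mul_of_nonneg_right hle hp2
      have h2 : |h θ - h θs| * (φ θ * Real.exp ((k + 1 : ℕ) * g θ)) =
          Real.exp (k * g θ) * (|h θ - h θs| * (φ θ * Real.exp (g θ))) := by
        rw [hsplit]; ring
      have h3 := mul_pos (half_pos hε) hp
      linarith
    · have hd : |h θ - h θs| < ε / 2 := by
        have := hball (x := θ) (by rw [dist_eq_norm]; exact not_le.1 hθ)
        rwa [Real.dist_eq] at this
      have h1 := mul_le_mul_of_nonneg_right hd.le hp.le
      have h2 := mul_nonneg (Real.exp_pos (k * (g θs - c))).le hp2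
      linarith
  have htail : Filter.Tendsto (fun k : ℕ => Real.exp (-(c / 2)) ^ k * (I / K))
      Filter.atTop (nhds 0) := by
    have := (tendsto_pow_atTop_nhds_zero_of_lt_one (Real.exp_pos (-(c / 2))).le
      (by rw [← Real.exp_zero]; exact Real.exp_lt_exp.2 (by linarith))).mul_const (I / K)
    simpa using this
  obtain ⟨k₀, hk₀⟩ := Filter.eventually_atTop.1 (htail.eventually_lt_const (half_pos hε))
  refine ⟨k₀, fun k hk => ?_⟩
  have hU := hupper k
  have hL := hlow k
  have hT := hk₀ k hk
  set N := ∫ θ, h θ * φ θ * Real.exp ((k + 1 : ℕ) * g θ)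
  set D := ∫ θ, φ θ * Real.exp ((k + 1 : ℕ) * g θ)
  have hD : 0 < D := lt_of_lt_of_le (mul_pos (Real.exp_pos _) hK) hL
  have hfac : Real.exp (k * (g θs - c)) * I =
      (Real.exp (-(c / 2)) ^ k * (I / K)) * (Real.exp (k * (g θs - c / 2)) * K) := by
    have : Real.exp (k * (g θs - c)) =
        Real.exp (-(c / 2)) ^ k * Real.exp (k * (g θs - c / 2)) := by
      rw [← Real.exp_nat_mul, ← Real.exp_add]; ring_nf
    rw [this]; field_simp
  have h1 : Real.exp (k * (g θs - c)) * I < ε / 2 * D := by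
    rw [hfac]
    calc _ ≤ (Real.exp (-(c / 2)) ^ k * (I / K)) * D :=
          mul_le_mul_of_nonneg_left hL (by positivity)
      _ < ε / 2 * D := mul_lt_mul_of_pos_right hT hD
  rw [Real.dist_eq, show N / D - h θs = (N - h θs * D) / D by field_simp, abs_div, abs_of_pos hD,
    div_lt_iff₀ hD]
  linarith
end
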